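/- arXiv:2108.08564 — 4 statements merged into one kernel-verified Lean document; each statement's English description precedes it below -/
import Mathlib

section
/- Let I be a nonzero proper homogeneous ideal of R = K[X_1,...,X_s] with degree excess function ε(I;n) = d(I^n) − p(I)n. Then for all positive integers m ≤ n, one has n·ε(I;m) ≥ m·ε(I;n). -/
open MvPolynomial

/-- The maximal generating degree `d(I)` of a homogeneous ideal. -/
noncomputable def maxGenDeg {K : Type*} [Field K] {σ : Type*}
    (I : Ideal (MvPolynomial σ K)) : ℕ :=
  sInf {d | I = Ideal.span {f | f ∈ I ∧ f.totalDegree ≤ d}}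

section Helpers

attribute [local instance] MvPolynomial.gradedAlgebra

lemma aux_comp_mul {K : Type*} [Field K] {σ : Type*} (a g : MvPolynomial σ K) {j e : ℕ}
    (hg : g.IsHomogeneous j) :
    homogeneousComponent e (a * g) = if j ≤ e then homogeneousComponent (e - j) a * g else 0 := by
  classical
  have h := DirectSum.coe_decompose_mul_of_right_mem (homogeneousSubmodule σ K) (a := a) e
    ((mem_homogeneousSubmodule j g).2 hg)
  have key : ∀ (x : MvPolynomial σ K) (i : ℕ),
      (DirectSum.decompose (homogeneousSubmodule σ K) x i : MvPolynomial σ K)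
        = homogeneousComponent i x := fun x i => decomposition.decompose'_apply x i
  simpa only [key] using h

lemma aux_mem_M {K : Type*} [Field K] {σ : Type*} {a : MvPolynomial σ K} {k : ℕ}
    (ha : a.IsHomogeneous k) (hk : k ≠ 0) : a ∈ Ideal.span (Set.range (X : σ → MvPolynomial σ K)) := by
  rw [← Set.image_univ, mem_ideal_span_X_image]
  intro m hm
  by_contra hcon
  push Not at hcon
  have : m = 0 := by ext i; simpa using hcon i (Set.mem_univ i)
  subst this
  have := ha.coeff_eq_zero (d := 0) (by simpa using hk.symm)
  simp [this] at hm

/-- components of elements of a span of homogeneous elements -/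
lemma aux_span_comp {K : Type*} [Field K] {σ : Type*} (S : Set (MvPolynomial σ K))
    (hS : ∀ g ∈ S, ∃ j, g.IsHomogeneous j) {x : MvPolynomial σ K} (hx : x ∈ Ideal.span S) (e : ℕ) :
    homogeneousComponent e x ∈ Ideal.span S := by
  induction hx using Submodule.closure_induction with
  | zero => simp
  | add x y _ _ hx hy => rw [map_add]; exact add_mem hx hy
  | smul_mem a g hg =>
    obtain ⟨j, hj⟩ := hS g hg
    rw [smul_eq_mul, aux_comp_mul a g hj]
    split_ifs
    · exact Ideal.mul_mem_left _ _ (Ideal.subset_span hg)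
    · exact zero_mem _

/-- a homogeneous element outside `M * J` has degree at most any generating degree. -/
lemma aux_A {K : Type*} [Field K] {σ : Type*} (S : Set (MvPolynomial σ K))
    (hS : ∀ g ∈ S, ∃ j, g.IsHomogeneous j) (D : ℕ)
    (hD : Ideal.span S = Ideal.span {f | f ∈ Ideal.span S ∧ f.totalDegree ≤ D})
    {g : MvPolynomial σ K} {e : ℕ} (hg : g.IsHomogeneous e) (hgS : g ∈ Ideal.span S)
    (hgM : g ∉ Ideal.span (Set.range (X : σ → MvPolynomial σ K)) * Ideal.span S) : e ≤ D := by
  by_contra hlt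
  push Not at hlt
  apply hgM
  rw [← homogeneousComponent_eq_self hg]
  have hx := hgS
  rw [hD] at hx
  clear hgM hgS hg
  induction hx using Submodule.closure_induction with
  | zero => simp
  | add x y _ _ hx hy => rw [map_add]; exact add_mem hx hy
  | smul_mem a h hh =>
    obtain ⟨h1, h2⟩ := hh
    rw [smul_eq_mul, ← sum_homogeneousComponent h, Finset.mul_sum, map_sum]
    refine sum_mem fun j hj => ?_
    rw [aux_comp_mul a _ (homogeneousComponent_isHomogeneous j h)]
    have : j ≤ D := by
      have := Finset.mem_range.1 hj
      omega
    split_ifs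
    · exact Ideal.mul_mem_mul
        (aux_mem_M (homogeneousComponent_isHomogeneous _ a) (by omega)) (aux_span_comp S hS h1 j)
    · exact zero_mem _

lemma aux_nonempty {K : Type*} [Field K] {σ : Type*} [Finite σ] (J : Ideal (MvPolynomial σ K)) :
    {d | J = Ideal.span {f | f ∈ J ∧ f.totalDegree ≤ d}}.Nonempty := by
  obtain ⟨T, hT⟩ := (IsNoetherian.noetherian J : J.FG)
  refine ⟨T.sup totalDegree, le_antisymm ?_ (Ideal.span_le.2 fun x hx => hx.1)⟩
  conv_lhs => rw [← hT]
  refine Ideal.span_mono fun x hx => ⟨?_, Finset.le_sup (f := totalDegree) hx⟩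
  rw [← hT]
  exact Submodule.subset_span hx

/-- Graded Nakayama. -/
lemma aux_B {K : Type*} [Field K] {σ : Type*} (S : Set (MvPolynomial σ K)) (E : ℕ)
    (J : Ideal (MvPolynomial σ K)) (hJ : J = Ideal.span S)
    (hS : ∀ g ∈ S, ∃ j, g.IsHomogeneous j ∧
      (g ∉ Ideal.span (Set.range (X : σ → MvPolynomial σ K)) * J → j ≤ E)) :
    J = Ideal.span {f | f ∈ J ∧ f.totalDegree ≤ E} := by
  set N := Ideal.span {f | f ∈ J ∧ f.totalDegree ≤ E} with hN
  have hSJ : S ⊆ J := by rw [hJ]; exact Ideal.subset_span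
  have main : ∀ e : ℕ, ∀ g ∈ S, g.IsHomogeneous e → g ∈ N := by
    intro e
    induction e using Nat.strong_induction_on with
    | _ e ih =>
    intro g hgS hge
    by_cases hgM : g ∈ Ideal.span (Set.range (X : σ → MvPolynomial σ K)) * J
    · rw [← homogeneousComponent_eq_self hge]
      rw [hJ, Ideal.span_mul_span'] at hgM
      clear hge hgS
      induction hgM using Submodule.closure_induction with
      | zero => simp
      | add x y _ _ hx hy => rw [map_add]; exact add_mem hx hy
      | smul_mem a h hh =>
        obtain ⟨_, ⟨k, rfl⟩, u, hu, rfl⟩ := hh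
        obtain ⟨j, hj, -⟩ := hS u hu
        simp only [smul_eq_mul]
        rw [← mul_assoc, aux_comp_mul _ u hj]
        split_ifs with hle
        · rcases hle.lt_or_eq with hlt | rfl
          · exact Ideal.mul_mem_left _ _ (ih j hlt u hu hj)
          · simp [← constantCoeff_eq]
        · exact zero_mem _
    · obtain ⟨j, hj, hjE⟩ := hS g hgS
      exact Ideal.subset_span ⟨hSJ hgS, hj.totalDegree_le.trans (hjE hgM)⟩
  refine le_antisymm ?_ (Ideal.span_le.2 fun x hx => hx.1)
  conv_lhs => rw [hJ]
  refine Ideal.span_le.2 fun g hg => ?_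
  obtain ⟨j, hj, -⟩ := hS g hg
  exact main j g hg hj

def prodSet {R : Type*} [CommRing R] {t : ℕ} (f : Fin t → R) (n : ℕ) : Set R :=
  {P | ∃ s : Multiset (Fin t), s.card = n ∧ (s.map f).prod = P}

lemma aux_pow {R : Type*} [CommRing R] {t : ℕ} (f : Fin t → R) (n : ℕ) :
    Ideal.span (Set.range f) ^ n = Ideal.span (prodSet f n) := by
  induction n with
  | zero =>
    rw [pow_zero, Ideal.one_eq_top, eq_comm, Ideal.eq_top_iff_one]
    exact Ideal.subset_span ⟨0, by simp, by simp⟩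
  | succ n ih =>
    rw [pow_succ, ih, Ideal.span_mul_span']
    congr 1
    ext P
    constructor
    · rintro ⟨_, ⟨s, hs, rfl⟩, _, ⟨i, rfl⟩, rfl⟩
      exact ⟨i ::ₘ s, by simp [hs], by simp [mul_comm]⟩
    · rintro ⟨s, hs, rfl⟩
      obtain ⟨i, s', rfl⟩ := Multiset.card_pos_iff_exists_mem.1 (by omega : 0 < s.card) |>.imp
        fun i hi => Multiset.exists_cons_of_mem hi
      exact ⟨(s'.map f).prod, ⟨s', by simpa using hs, rfl⟩, f i, ⟨i, rfl⟩, by simp [mul_comm]⟩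

lemma aux_hom {K : Type*} [Field K] {σ : Type*} {t : ℕ} (f : Fin t → MvPolynomial σ K)
    (deg : Fin t → ℕ) (hhom : ∀ i, (f i).IsHomogeneous (deg i)) (s : Multiset (Fin t)) :
    (s.map f).prod.IsHomogeneous (s.map deg).sum := by
  induction s using Multiset.induction_on with
  | empty => simpa using isHomogeneous_one σ K
  | cons i s ih => simpa using (hhom i).mul ih

lemma exists_min_cons {t : ℕ} (deg : Fin t → ℕ) (s : Multiset (Fin t)) (hs : 0 < s.card) :
    ∃ i s', s = i ::ₘ s' ∧ s'.card * deg i ≤ (s'.map deg).sum := by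
  obtain ⟨i, hi, hmin⟩ := Finset.exists_min_image s.toFinset deg
    (by obtain ⟨i, hi⟩ := Multiset.card_pos_iff_exists_mem.1 hs; exact ⟨i, by simpa using hi⟩)
  obtain ⟨s', rfl⟩ := Multiset.exists_cons_of_mem (Multiset.mem_toFinset.1 hi)
  refine ⟨i, s', rfl, ?_⟩
  have := Multiset.card_nsmul_le_sum (s := s'.map deg) (a := deg i) (by
    intro x hx
    obtain ⟨j, hj, rfl⟩ := Multiset.mem_map.1 hx
    exact hmin j (by simp [hj]))
  simpa using this

lemma aux_deg {K : Type*} [Field K] {σ : Type*} [Finite σ] {t : ℕ} (f : Fin t → MvPolynomial σ K)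
    (deg : Fin t → ℕ) (hhom : ∀ i, (f i).IsHomogeneous (deg i)) (m : ℕ) (hm : 1 ≤ m)
    (n : ℕ) (hmn : m ≤ n) : ∀ s : Multiset (Fin t), s.card = n →
      (s.map f).prod ∉ Ideal.span (Set.range (X : σ → MvPolynomial σ K)) *
        Ideal.span (Set.range f) ^ n →
      m * (s.map deg).sum ≤ n * maxGenDeg (Ideal.span (Set.range f) ^ m) := by
  induction n, hmn using Nat.le_induction with
  | base =>
    intro s hs hP
    refine Nat.mul_le_mul_left _ ?_
    have hD := Nat.sInf_mem (aux_nonempty (Ideal.span (Set.range f) ^ m))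
    change Ideal.span (Set.range f) ^ m = Ideal.span {g | g ∈ Ideal.span (Set.range f) ^ m ∧
      g.totalDegree ≤ maxGenDeg (Ideal.span (Set.range f) ^ m)} at hD
    generalize maxGenDeg (Ideal.span (Set.range f) ^ m) = D at hD ⊢
    rw [aux_pow] at hD hP
    refine aux_A (prodSet f m) ?_ D hD (aux_hom f deg hhom s) (Ideal.subset_span ⟨s, hs, rfl⟩) hP
    rintro _ ⟨s, -, rfl⟩
    exact ⟨_, aux_hom f deg hhom s⟩
  | succ n hmn ih =>
    intro s hs hP
    obtain ⟨i, s', rfl, hmin⟩ := exists_min_cons deg s (by omega)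
    have hs' : s'.card = n := by simpa using hs
    have h1 := ih s' hs' (by
      intro hmem
      apply hP
      rw [Multiset.map_cons, Multiset.prod_cons, mul_comm (f i), pow_succ, ← mul_assoc]
      exact Ideal.mul_mem_mul hmem (Ideal.subset_span ⟨i, rfl⟩))
    rw [hs'] at hmin
    rw [Multiset.map_cons, Multiset.sum_cons]
    generalize maxGenDeg (Ideal.span (Set.range f) ^ m) = D at *
    generalize (s'.map deg).sum = q at *
    have hn : 0 < n := lt_of_lt_of_le hm hmn
    refine le_of_mul_le_mul_left (a := n) ?_ hn
    calc n * (m * (deg i + q)) = m * (n * deg i) + n * (m * q) := by ring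
      _ ≤ m * q + n * (m * q) := by gcongr
      _ = (n + 1) * (m * q) := by ring
      _ ≤ (n + 1) * (n * D) := by gcongr
      _ = n * ((n + 1) * D) := by ring

end Helpers

/-- for all `1 ≤ m ≤ n`, `n·ε(I;m) ≥ m·ε(I;n)`, where
`ε(I;n) = d(I^n) − p(I)·n`. -/
theorem degree_excess_ratio_monotone
    {K : Type*} [Field K] (s t : ℕ) (f : Fin t → MvPolynomial (Fin s) K)
    (deg : Fin t → ℕ) (hhom : ∀ i, (f i).IsHomogeneous (deg i))
    (I : Ideal (MvPolynomial (Fin s) K)) (hI : I = Ideal.span (Set.range f))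
    (hne : I ≠ ⊥) (hpr : I ≠ ⊤)
    (hmin : ∀ i, f i ∉ Ideal.span (f '' {j | j ≠ i}))
    (M : Ideal (MvPolynomial (Fin s) K)) (hM : M = Ideal.span (Set.range X))
    (p : ℕ) (hp : p = sSup {d | ∃ i, deg i = d ∧ ∀ n ≥ 1, f i ^ n ∉ M * I ^ n}) :
    ∀ m n : ℕ, 1 ≤ m → m ≤ n →
      (m : ℤ) * ((maxGenDeg (I ^ n) : ℤ) - p * n) ≤
        (n : ℤ) * ((maxGenDeg (I ^ m) : ℤ) - p * m) := by
  intro m n hm hmn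
  have key : m * maxGenDeg (I ^ n) ≤ n * maxGenDeg (I ^ m) := by
    have h : maxGenDeg (I ^ n) ≤ n * maxGenDeg (I ^ m) / m := by
      refine Nat.sInf_le ?_
      refine aux_B (prodSet f n) _ (I ^ n) (by rw [hI, aux_pow]) ?_
      rintro _ ⟨u, hu, rfl⟩
      refine ⟨_, aux_hom f deg hhom u, fun hP => ?_⟩
      rw [Nat.le_div_iff_mul_le (by omega), mul_comm]
      subst hI
      exact aux_deg f deg hhom m hm n hmn u hu hP
    calc m * maxGenDeg (I ^ n) ≤ m * (n * maxGenDeg (I ^ m) / m) := by gcongr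
      _ ≤ _ := Nat.mul_div_le _ _
  have key' : (m : ℤ) * maxGenDeg (I ^ n) ≤ n * maxGenDeg (I ^ m) := by exact_mod_cast key
  linarith [mul_comm ((p : ℤ) * m) n, mul_comm ((p : ℤ) * n) m,
    (by ring : (m : ℤ) * (p * n) = n * (p * m))]
end

section
/- Let I be a monomial ideal of K[X_1,...,X_s], δ(I) the maximal ℓ¹-norm of a vertex of the Newton polyhedron of I, and q the number of minimal generators of I of degree greater than δ(I). Then p(I) = δ(I), the reduction number r(I) satisfies r(I) ≤ q·s^{s/2}·δ(I)^s − q, and ε(I;n) ≤ q·(s^{s/2}δ(I)^s − 1)·(d(I) − δ(I)) for all n ≥ 1. -/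
open MvPolynomial

/-- An ideal of a polynomial ring is a monomial ideal if it is generated by monomials. -/
def IsMonomialIdeal {K : Type*} [Field K] {σ : Type*}
    (I : Ideal (MvPolynomial σ K)) : Prop :=
  ∃ S : Set (σ →₀ ℕ), I = Ideal.span ((fun α => monomial α (1 : K)) '' S)

/-- The Newton polyhedron `NP(I) = conv(E(I))` of a monomial ideal. -/
def newtonPolyhedron {K : Type*} [Field K] (s : ℕ)
    (I : Ideal (MvPolynomial (Fin s) K)) : Set (Fin s → ℝ) :=
  convexHull ℝ {x | ∃ α : Fin s →₀ ℕ, monomial α (1 : K) ∈ I ∧ x = fun i => (α i : ℝ)}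


lemma lp_indep {s : ℕ} {ι : Type*} [Fintype ι] (a : ι → Fin s → ℝ) (w : ι → ℝ)
    (ha0 : ∀ i j, 0 ≤ a i j) (ha : ∀ i, a i ≠ 0) (x : Fin s → ℝ)
    (c : ι → ℝ) (hc : ∀ i, 0 ≤ c i) (hcx : ∑ i, c i • a i = x) (hcw : 1 ≤ ∑ i, w i * c i) :
    ∃ c : ι → ℝ, (∀ i, 0 ≤ c i) ∧ ∑ i, c i • a i = x ∧ 1 ≤ ∑ i, w i * c i ∧
      LinearIndepOn ℝ a {i | c i ≠ 0} := by
  classical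
  induction h : (Finset.univ.filter (fun i => c i ≠ 0)).card using Nat.strong_induction_on
    generalizing c with
  | _ n ih =>
  by_cases hli : LinearIndepOn ℝ a {i | c i ≠ 0}
  · exact ⟨c, hc, hcx, hcw, hli⟩
  obtain ⟨d, hd0, hdsupp, i0, hi0, hdw⟩ : ∃ d : ι → ℝ, ∑ i, d i • a i = 0 ∧
      (∀ i, c i = 0 → d i = 0) ∧ ∃ i0, d i0 ≠ 0 ∧ 0 ≤ ∑ i, w i * d i := by
    have : ∃ d : ι → ℝ, ∑ i, d i • a i = 0 ∧ (∀ i, c i = 0 → d i = 0) ∧ ∃ i0, d i0 ≠ 0 := by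
      have h1 := hli
      rw [show {i | c i ≠ 0} = ((Finset.univ.filter (fun i => c i ≠ 0) : Finset ι) : Set ι) by
        ext; simp, linearIndepOn_finset_iff] at h1
      push Not at h1
      obtain ⟨d, hd, i, hi, hdi⟩ := h1
      refine ⟨fun i => if c i ≠ 0 then d i else 0, ?_, ?_, i, ?_⟩
      · rw [← hd, Finset.sum_filter]
        refine Finset.sum_congr rfl fun i _ => ?_
        by_cases hci : c i = 0 <;> simp [hci]
      · intro i hi; simp [hi]
      · simp at hi; simp [hi, hdi]
    obtain ⟨d, h1, h2, i0, h3⟩ := this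
    rcases le_total 0 (∑ i, w i * d i) with h4 | h4
    · exact ⟨d, h1, h2, i0, h3, h4⟩
    · refine ⟨-d, ?_, ?_, i0, ?_, ?_⟩
      · simpa using h1
      · intro i hi; simp [h2 i hi]
      · simpa using h3
      · simpa using h4
  -- some negative coordinate
  have hneg : (Finset.univ.filter (fun i => d i < 0)).Nonempty := by
    by_contra hcon
    rw [Finset.not_nonempty_iff_eq_empty, Finset.filter_eq_empty_iff] at hcon
    have hd' : ∀ i, 0 ≤ d i := fun i => not_lt.mp (hcon (Finset.mem_univ i))
    apply ha i0
    ext j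
    have h1 := congrFun hd0 j
    simp only [Finset.sum_apply, Pi.smul_apply, smul_eq_mul, Pi.zero_apply] at h1
    rw [Finset.sum_eq_zero_iff_of_nonneg (fun i _ => mul_nonneg (hd' i) (ha0 i j))] at h1
    have := h1 i0 (Finset.mem_univ _)
    simpa [hi0] using this
  obtain ⟨k, hk, hkmin⟩ := Finset.exists_min_image _ (fun i => c i / (- d i)) hneg
  simp only [Finset.mem_filter, Finset.mem_univ, true_and] at hk hkmin
  set t := c k / (- d k) with ht
  have ht0 : 0 ≤ t := div_nonneg (hc k) (by linarith)
  have hck : c k ≠ 0 := fun h => by have := hdsupp k h; linarith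
  refine ih _ ?_ (fun i => c i + t * d i) ?_ ?_ ?_ rfl
  · rw [← h]
    apply Finset.card_lt_card
    rw [Finset.ssubset_iff_of_subset]
    · refine ⟨k, by simp [hck], ?_⟩
      have : d k ≠ 0 := hk.ne
      simp only [Finset.mem_filter, Finset.mem_univ, true_and, not_not, ht]
      field_simp
      ring
    · intro i
      simp only [Finset.mem_filter, Finset.mem_univ, true_and]
      intro h1 h2
      exact h1 (by simp [h2, hdsupp i h2])
  · intro i
    show 0 ≤ c i + t * d i
    by_cases hi : d i < 0
    · have := hkmin i hi
      rw [le_div_iff₀ (by linarith)] at this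
      linarith
    · have := mul_nonneg ht0 (not_lt.mp hi)
      linarith [hc i]
  · simp only [add_smul, Finset.sum_add_distrib, mul_smul, ← Finset.smul_sum, hd0, hcx]
    simp
  · have : ∑ i, w i * (c i + t * d i) = ∑ i, w i * c i + t * ∑ i, w i * d i := by
      rw [Finset.mul_sum, ← Finset.sum_add_distrib]
      exact Finset.sum_congr rfl fun i _ => by ring
    rw [this]
    have := mul_nonneg ht0 hdw
    linarith

lemma det_bound {s : ℕ} (A : Matrix (Fin s) (Fin s) ℤ) (δ : ℕ) (h0 : ∀ i j, 0 ≤ A i j)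
    (h : ∀ i, ∑ j, A i j ≤ δ) : A.det.natAbs ≤ δ ^ s := by
  have h1 : |A.det| ≤ (δ : ℤ) ^ s := by
    rw [← Matrix.det_transpose, Matrix.det_apply']
    calc |∑ σ : Equiv.Perm (Fin s), ((Equiv.Perm.sign σ : ℤˣ) : ℤ) * ∏ i, A.transpose (σ i) i|
        ≤ ∑ σ : Equiv.Perm (Fin s), |((Equiv.Perm.sign σ : ℤˣ) : ℤ) * ∏ i, A.transpose (σ i) i| :=
          Finset.abs_sum_le_sum_abs _ _
      _ = ∑ σ : Equiv.Perm (Fin s), ∏ i, A i (σ i) := by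
          refine Finset.sum_congr rfl fun σ _ => ?_
          have h2 : 0 ≤ ∏ i, A i (σ i) := Finset.prod_nonneg fun i _ => h0 _ _
          have h3 : ∏ i, A.transpose (σ i) i = ∏ i, A i (σ i) := rfl
          rw [h3, abs_mul, abs_of_nonneg h2]
          rcases Int.units_eq_one_or (Equiv.Perm.sign σ) with h | h <;> simp [h]
      _ ≤ ∑ f : Fin s → Fin s, ∏ i, A i (f i) := by
          have := Finset.sum_map (Finset.univ : Finset (Equiv.Perm (Fin s)))
            ⟨fun σ => (σ : Fin s → Fin s), DFunLike.coe_injective⟩ (fun f => ∏ i, A i (f i))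
          simp only [Function.Embedding.coeFn_mk] at this
          rw [← this]
          exact Finset.sum_le_sum_of_subset_of_nonneg (Finset.subset_univ _)
            fun f _ _ => Finset.prod_nonneg fun i _ => h0 _ _
      _ = ∏ i, ∑ j, A i j := by
          have := Finset.prod_univ_sum (fun _ : Fin s => (Finset.univ : Finset (Fin s)))
            (fun i j => A i j)
          rw [this]; simp
      _ ≤ ∏ i : Fin s, (δ : ℤ) := Finset.prod_le_prod
            (fun i _ => Finset.sum_nonneg fun j _ => h0 _ _) fun i _ => h i
      _ = _ := by simp
  zify
  exact h1

open Matrix in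
lemma lp_int {s : ℕ} {ι : Type*} [Fintype ι] (a : ι → Fin s → ℕ) (w : ι → ℕ)
    (ha : ∀ i, a i ≠ 0) (δ : ℕ) (hδ : ∀ i, ∑ j, a i j ≤ δ)
    (hspan : ⊤ ≤ Submodule.span ℝ (Set.range fun i j => (a i j : ℝ))) (x : Fin s → ℕ)
    (c : ι → ℝ) (hc : ∀ i, 0 ≤ c i) (hcx : ∀ j, ∑ i, c i * a i j = x j)
    (hcw : 1 ≤ ∑ i, (w i : ℝ) * c i) :
    ∃ D : ℕ, 1 ≤ D ∧ D ≤ δ ^ s ∧ ∃ n : ι → ℕ, (∀ j, ∑ i, n i * a i j = D * x j) ∧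
      D ≤ ∑ i, w i * n i := by
  classical
  obtain ⟨c, hc, hcx, hcw, hli⟩ := lp_indep (fun i j => (a i j : ℝ)) (fun i => (w i : ℝ))
    (fun i j => Nat.cast_nonneg _)
    (fun i h => ha i (by ext j; have := congrFun h j; simpa using this))
    (fun j => (x j : ℝ)) c hc (by ext j; simpa using hcx j) hcw
  obtain ⟨b, -, hcb, hb1, hb2⟩ := exists_linearIndepOn_extension hli (Set.subset_univ _)
  have hbt : ⊤ ≤ Submodule.span ℝ (Set.range fun i : b => (fun j => (a i j : ℝ))) := by
    refine hspan.trans (Submodule.span_le.mpr ?_)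
    rw [← Set.image_univ]
    refine hb1.trans ?_
    rw [Set.image_eq_range]
  let B := Module.Basis.mk hb2 hbt
  have e : Fin s ≃ b := Fintype.equivOfCardEq (by
    have := Module.finrank_eq_card_basis B
    simpa using this)
  let A : Matrix (Fin s) (Fin s) ℤ := fun i j => (a (e i) j : ℤ)
  let AR : Matrix (Fin s) (Fin s) ℝ := A.map (Int.castRingHom ℝ)
  have hARdet : AR.det = (A.det : ℝ) := by
    have := (Int.castRingHom ℝ).map_det A
    simpa [AR] using this.symm
  have hdet : AR.det ≠ 0 := by
    have h1 : LinearIndependent ℝ AR.row := by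
      have := (hb2.comp e e.injective)
      exact this
    rw [Matrix.linearIndependent_rows_iff_isUnit, Matrix.isUnit_iff_isUnit_det] at h1
    exact h1.ne_zero
  have hsum : ∀ f : ι → ℝ, (∀ i, c i = 0 → f i = 0) → ∑ i, f i = ∑ k, f (e k) := by
    intro f hf
    refine (Finset.sum_of_injOn (fun k => (e k : ι)) ?_ ?_ ?_ ?_).symm
    · intro k _ l _ h
      exact e.injective (Subtype.ext h)
    · intro k _; simp
    · intro i _ hi
      apply hf
      by_contra hci
      exact hi ⟨e.symm ⟨i, hcb hci⟩, by simp, by simp⟩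
    · intro k _; rfl
  have hcx' : (fun k => c (e k)) ᵥ* AR = fun j => (x j : ℝ) := by
    ext j
    have h1 := congrFun hcx j
    simp only [Finset.sum_apply, Pi.smul_apply, smul_eq_mul] at h1
    rw [← h1, hsum _ (fun i hi => by simp [hi])]
    simp [Matrix.vecMul, dotProduct, AR, A, Matrix.map]
  have hadj : AR.det • (fun k => c (e k)) = (fun j => (x j : ℝ)) ᵥ* AR.adjugate := by
    rw [← hcx', Matrix.vecMul_vecMul, Matrix.mul_adjugate, Matrix.vecMul_smul, Matrix.vecMul_one]
  have hzint : ∀ k, ∃ z : ℤ, (A.det : ℝ) * c (e k) = z := by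
    intro k
    refine ⟨((fun j => (x j : ℤ)) ᵥ* A.adjugate) k, ?_⟩
    have h1 := congrFun hadj k
    rw [hARdet] at h1
    have h2 : AR.adjugate = A.adjugate.map (Int.castRingHom ℝ) := by
      have := (Int.castRingHom ℝ).map_adjugate A
      exact this.symm
    rw [h2] at h1
    simp only [Pi.smul_apply, smul_eq_mul] at h1
    rw [h1]
    simp [Matrix.vecMul, dotProduct]
  have hnat : ∀ i, ∃ m : ℕ, (A.det.natAbs : ℝ) * c i = m := by
    intro i
    by_cases hi : c i = 0
    · exact ⟨0, by simp [hi]⟩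
    obtain ⟨z, hz⟩ := hzint (e.symm ⟨i, hcb hi⟩)
    refine ⟨z.natAbs, ?_⟩
    simp only [Equiv.apply_symm_apply] at hz
    rw [Nat.cast_natAbs, Nat.cast_natAbs, Int.cast_abs, Int.cast_abs, ← hz, abs_mul,
      abs_of_nonneg (hc i)]
  choose n hn using hnat
  refine ⟨A.det.natAbs, ?_, det_bound A δ (fun i j => by simp [A]) ?_, n, ?_, ?_⟩
  · rw [hARdet] at hdet
    have : A.det ≠ 0 := by exact_mod_cast hdet
    omega
  · intro i
    have := hδ (e i)
    simp only [A]
    exact_mod_cast this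
  · intro j
    have h1 := congrFun hcx j
    simp only [Finset.sum_apply, Pi.smul_apply, smul_eq_mul] at h1
    have : ((∑ i, n i * a i j : ℕ) : ℝ) = ((A.det.natAbs * x j : ℕ) : ℝ) := by
      push_cast
      rw [← h1, Finset.mul_sum]
      refine Finset.sum_congr rfl fun i _ => ?_
      rw [← hn]
      push_cast
      ring
    exact_mod_cast this
  · have : ((A.det.natAbs : ℕ) : ℝ) ≤ ((∑ i, w i * n i : ℕ) : ℝ) := by
      push_cast
      simp_rw [← hn]
      have h3 : ∑ i, (w i : ℝ) * ((A.det.natAbs : ℝ) * c i)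
          = A.det.natAbs * ∑ i, (w i : ℝ) * c i := by
        rw [Finset.mul_sum]
        exact Finset.sum_congr rfl fun i _ => by ring
      rw [h3]
      exact le_mul_of_one_le_right (Nat.cast_nonneg _) hcw
    exact_mod_cast this

/-- upper set generated by the convex hull -/
def upHull {s : ℕ} (T : Set (Fin s → ℝ)) : Set (Fin s → ℝ) :=
  {x | ∃ u ∈ convexHull ℝ T, u ≤ x}

lemma upHull_convex {s : ℕ} (T : Set (Fin s → ℝ)) : Convex ℝ (upHull T) := by
  rintro x ⟨u, hu, hux⟩ y ⟨v, hv, hvy⟩ a b ha hb hab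
  exact ⟨a • u + b • v, convex_convexHull ℝ T hu hv ha hb hab,
    add_le_add (smul_le_smul_of_nonneg_left hux ha) (smul_le_smul_of_nonneg_left hvy hb)⟩

lemma subset_upHull {s : ℕ} (T : Set (Fin s → ℝ)) : T ⊆ upHull T :=
  fun x hx => ⟨x, subset_convexHull ℝ T hx, le_rfl⟩

lemma upHull_up {s : ℕ} {T : Set (Fin s → ℝ)} {x y : Fin s → ℝ} (hx : x ∈ upHull T)
    (h : x ≤ y) : y ∈ upHull T := by
  obtain ⟨u, hu, hux⟩ := hx
  exact ⟨u, hu, hux.trans h⟩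

lemma upHull_mono_of {s : ℕ} {T U : Set (Fin s → ℝ)} (h : T ⊆ upHull U) :
    upHull T ⊆ upHull U := by
  rintro x ⟨u, hu, hux⟩
  exact upHull_up (convexHull_min h (upHull_convex U) hu) hux

lemma mem_insert_up {s : ℕ} {T : Set (Fin s → ℝ)} {v x : Fin s → ℝ}
    (hx : x ∈ upHull (insert v T)) : v ≤ x ∨ ∃ a : ℝ, 0 < a ∧ a ≤ 1 ∧ ∃ u ∈ convexHull ℝ T,
      (1 - a) • v + a • u ≤ x := by
  obtain ⟨w, hw, hwx⟩ := hx
  rcases T.eq_empty_or_nonempty with rfl | hT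
  · simp at hw; left; rw [← hw]; exact hwx
  rw [convexHull_insert hT, mem_convexJoin] at hw
  obtain ⟨v', hv', u, hu, hseg⟩ := hw
  rw [Set.mem_singleton_iff] at hv'
  subst hv'
  obtain ⟨a, b, ha, hb, hab, rfl⟩ := hseg
  rcases hb.eq_or_lt with rfl | hb
  · left
    have : a = 1 := by linarith
    simpa [this] using hwx
  · right
    refine ⟨b, hb, by linarith, u, hu, ?_⟩
    rwa [show 1 - b = a by linarith]

lemma insert_extreme {s : ℕ} {T A : Set (Fin s → ℝ)} {v : Fin s → ℝ}
    (hA : A ⊆ upHull (insert v T)) (hvA : v ∈ A) (hv : v ∉ upHull T) :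
    v ∈ Set.extremePoints ℝ A := by
  rw [mem_extremePoints]
  refine ⟨hvA, fun x hx y hy hseg => ?_⟩
  obtain ⟨p, r, hp, hr, hpr, hvxy⟩ := hseg
  have key : v ≤ x ∧ v ≤ y → x = v ∧ y = v := by
    rintro ⟨h1, h2⟩
    have hr' : r = 1 - p := by linarith
    constructor <;> ext i <;> have := congrFun hvxy i <;> have h1 := h1 i <;>
      have h2 := h2 i <;> simp only [Pi.add_apply, Pi.smul_apply, smul_eq_mul] at this <;>
      subst hr' <;> nlinarith
  rcases mem_insert_up (hA hx) with hx' | ⟨a, ha, ha1, u, hu, hux⟩ <;>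
  rcases mem_insert_up (hA hy) with hy' | ⟨b, hb, hb1, u', hu', huy⟩
  · exact key ⟨hx', hy'⟩
  · exfalso; apply hv
    refine ⟨u', hu', fun i => ?_⟩
    have := congrFun hvxy i
    have h1 := hx' i
    have h2 := huy i
    simp only [Pi.add_apply, Pi.smul_apply, smul_eq_mul] at this h2
    have h3 := mul_le_mul_of_nonneg_left h1 hp.le
    have h4 := mul_le_mul_of_nonneg_left h2 hr.le
    have h5 : (r * b) * u' i ≤ (r * b) * v i := by
      have : p = 1 - r := by linarith
      subst this
      nlinarith
    exact le_of_mul_le_mul_left h5 (by positivity)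
  · exfalso; apply hv
    refine ⟨u, hu, fun i => ?_⟩
    have := congrFun hvxy i
    have h1 := hy' i
    have h2 := hux i
    simp only [Pi.add_apply, Pi.smul_apply, smul_eq_mul] at this h2
    have h3 := mul_le_mul_of_nonneg_left h1 hr.le
    have h4 := mul_le_mul_of_nonneg_left h2 hp.le
    have h5 : (p * a) * u i ≤ (p * a) * v i := by
      have : r = 1 - p := by linarith
      subst this
      nlinarith
    exact le_of_mul_le_mul_left h5 (by positivity)
  · exfalso; apply hv
    have hc : 0 < p * a + r * b := by positivity
    refine ⟨(p * a / (p * a + r * b)) • u + (r * b / (p * a + r * b)) • u',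
      convex_convexHull ℝ T hu hu' (by positivity) (by positivity) (by field_simp), fun i => ?_⟩
    have := congrFun hvxy i
    have h1 := hux i
    have h2 := huy i
    simp only [Pi.add_apply, Pi.smul_apply, smul_eq_mul] at this h2 h1 ⊢
    have h3 := mul_le_mul_of_nonneg_left h1 hp.le
    have h4 := mul_le_mul_of_nonneg_left h2 hr.le
    have h5 : (p * a) * u i + (r * b) * u' i ≤ (p * a + r * b) * v i := by
      have : r = 1 - p := by linarith
      subst this
      nlinarith
    have h6 : (p * a / (p * a + r * b)) * u i + (r * b / (p * a + r * b)) * u' i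
      = ((p * a) * u i + (r * b) * u' i) / (p * a + r * b) := by ring
    rw [h6, div_le_iff₀ hc]
    linarith

lemma exists_extreme_upHull {s : ℕ} (P : Finset (Fin s → ℝ)) (A : Set (Fin s → ℝ))
    (hPA : (P : Set (Fin s → ℝ)) ⊆ A) (hA : A ⊆ upHull P) :
    ∃ V ⊆ P, A ⊆ upHull V ∧ ∀ v ∈ V, v ∈ Set.extremePoints ℝ A := by
  classical
  induction P using Finset.strongInduction with
  | H P ih =>
  by_cases h : ∃ v ∈ P, v ∈ upHull ((P.erase v : Finset (Fin s → ℝ)) : Set (Fin s → ℝ))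
  · obtain ⟨v, hvP, hv⟩ := h
    obtain ⟨V, h1, h2⟩ := ih (P.erase v) (Finset.erase_ssubset hvP)
      (fun x hx => hPA (Finset.erase_subset _ _ hx)) (hA.trans (upHull_mono_of (by
        intro x hx
        by_cases hxv : x = v
        · subst hxv; exact hv
        · exact subset_upHull _ (by simpa [hxv] using hx))))
    exact ⟨V, h1.trans (Finset.erase_subset _ _), h2⟩
  · push Not at h
    refine ⟨P, le_rfl, hA, fun v hv => ?_⟩
    refine insert_extreme (T := ((P.erase v : Finset (Fin s → ℝ)) : Set (Fin s → ℝ))) ?_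
      (hPA hv) (h v hv)
    rw [← Finset.coe_insert, Finset.insert_erase hv]
    exact hA

section Mon
variable {K : Type*} [Field K] {s : ℕ}

/-- exponents of the monomials in an ideal -/
def Ex (I : Ideal (MvPolynomial (Fin s) K)) : Set (Fin s →₀ ℕ) :=
  {α | monomial α (1 : K) ∈ I}

lemma Ex_add {I J : Ideal (MvPolynomial (Fin s) K)} {α β : Fin s →₀ ℕ}
    (hα : α ∈ Ex I) (hβ : β ∈ Ex J) : α + β ∈ Ex (I * J) := by
  have := Ideal.mul_mem_mul hα hβ
  rwa [monomial_mul, one_mul] at this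

lemma Ex_up {I : Ideal (MvPolynomial (Fin s) K)} {α β : Fin s →₀ ℕ}
    (hα : α ∈ Ex I) (h : α ≤ β) : β ∈ Ex I := by
  obtain ⟨γ, rfl⟩ := exists_add_of_le h
  have := Ideal.mul_mem_right (monomial γ (1 : K)) I hα
  rwa [monomial_mul, one_mul] at this

lemma zero_mem_Ex_top {I : Ideal (MvPolynomial (Fin s) K)} : 0 ∈ Ex I ↔ I = ⊤ := by
  rw [Ideal.eq_top_iff_one]; rfl

lemma Ex_nsmul {I : Ideal (MvPolynomial (Fin s) K)} {α : Fin s →₀ ℕ}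
    (hα : α ∈ Ex I) (n : ℕ) : n • α ∈ Ex (I ^ n) := by
  induction n with
  | zero => rw [zero_smul, zero_mem_Ex_top]; simp
  | succ n ih => rw [succ_nsmul, pow_succ]; exact Ex_add ih hα

lemma Ex_sum {I : Ideal (MvPolynomial (Fin s) K)} {ι : Type*} (S : Finset ι) (n : ι → ℕ)
    (v : ι → Fin s →₀ ℕ) (hv : ∀ i ∈ S, v i ∈ Ex I) :
    ∑ i ∈ S, n i • v i ∈ Ex (I ^ (∑ i ∈ S, n i)) := by
  classical
  induction S using Finset.induction_on with
  | empty => rw [Finset.sum_empty, Finset.sum_empty, zero_mem_Ex_top]; simp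
  | insert a S ha ih =>
    rw [Finset.sum_insert ha, Finset.sum_insert ha, pow_add]
    exact Ex_add (Ex_nsmul (hv a (by simp)) _) (ih fun i hi => hv i (by simp [hi]))

lemma Ex_multiset {I : Ideal (MvPolynomial (Fin s) K)} (T : Multiset (Fin s →₀ ℕ))
    (hT : ∀ t ∈ T, t ∈ Ex I) : T.sum ∈ Ex (I ^ T.card) := by
  induction T using Multiset.induction_on with
  | empty => rw [Multiset.sum_zero, zero_mem_Ex_top]; simp
  | cons a T ih =>
    rw [Multiset.sum_cons, Multiset.card_cons, pow_succ']
    exact Ex_add (hT a (by simp)) (ih fun t ht => hT t (by simp [ht]))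

lemma span_eq_of_Ex {I : Ideal (MvPolynomial (Fin s) K)} (hI : IsMonomialIdeal I) :
    I = Ideal.span ((fun α => monomial α (1 : K)) '' Ex I) := by
  obtain ⟨S, hS⟩ := hI
  apply le_antisymm
  · conv_lhs => rw [hS]
    apply Ideal.span_mono
    apply Set.image_mono
    intro α hα
    show monomial α (1 : K) ∈ I
    rw [hS]
    exact Ideal.subset_span ⟨α, hα, rfl⟩
  · rw [Ideal.span_le]
    rintro _ ⟨α, hα, rfl⟩
    exact hα

lemma Ex_span {S : Set (Fin s →₀ ℕ)} {γ : Fin s →₀ ℕ} :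
    γ ∈ Ex (Ideal.span ((fun α => monomial α (1 : K)) '' S)) ↔ ∃ α ∈ S, α ≤ γ := by
  classical
  show monomial γ (1 : K) ∈ Ideal.span ((fun α => monomial α (1 : K)) '' S) ↔ _
  rw [mem_ideal_span_monomial_image]
  simp [support_monomial]

lemma support_mem {I : Ideal (MvPolynomial (Fin s) K)} (hI : IsMonomialIdeal I)
    {f : MvPolynomial (Fin s) K} (hf : f ∈ I) {α : Fin s →₀ ℕ} (hα : α ∈ f.support) :
    α ∈ Ex I := by
  rw [span_eq_of_Ex hI, mem_ideal_span_monomial_image] at hf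
  obtain ⟨β, hβ, h⟩ := hf α hα
  exact Ex_up hβ h

lemma le_of_Ex {I J : Ideal (MvPolynomial (Fin s) K)} (hI : IsMonomialIdeal I)
    (h : Ex I ⊆ Ex J) : I ≤ J := by
  rw [span_eq_of_Ex hI, Ideal.span_le]
  rintro _ ⟨α, hα, rfl⟩
  exact h hα

lemma mul_eq_span {I J : Ideal (MvPolynomial (Fin s) K)} (hI : IsMonomialIdeal I)
    (hJ : IsMonomialIdeal J) : I * J = Ideal.span ((fun α => monomial α (1 : K)) ''
      {γ | ∃ α ∈ Ex I, ∃ β ∈ Ex J, α + β = γ}) := by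
  apply le_antisymm
  · conv_lhs => rw [span_eq_of_Ex hI, span_eq_of_Ex hJ]
    rw [Ideal.span_mul_span', Ideal.span_le]
    rintro _ ⟨_, ⟨α, hα, rfl⟩, _, ⟨β, hβ, rfl⟩, rfl⟩
    apply Ideal.subset_span
    exact ⟨α + β, ⟨α, hα, β, hβ, rfl⟩, by simp [monomial_mul]⟩
  · rw [Ideal.span_le]
    rintro _ ⟨_, ⟨α, hα, β, hβ, rfl⟩, rfl⟩
    exact Ex_add hα hβ

lemma isMon_mul {I J : Ideal (MvPolynomial (Fin s) K)} (hI : IsMonomialIdeal I)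
    (hJ : IsMonomialIdeal J) : IsMonomialIdeal (I * J) := ⟨_, mul_eq_span hI hJ⟩

lemma isMon_pow {I : Ideal (MvPolynomial (Fin s) K)} (hI : IsMonomialIdeal I) (n : ℕ) :
    IsMonomialIdeal (I ^ n) := by
  induction n with
  | zero => exact ⟨{0}, by
      rw [pow_zero, Set.image_singleton]
      symm; rw [Ideal.one_eq_top, Ideal.eq_top_iff_one]
      exact Ideal.subset_span rfl⟩
  | succ n ih => rw [pow_succ]; exact isMon_mul ih hI

lemma mem_Ex_mul {I J : Ideal (MvPolynomial (Fin s) K)} (hI : IsMonomialIdeal I)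
    (hJ : IsMonomialIdeal J) {γ : Fin s →₀ ℕ} (h : γ ∈ Ex (I * J)) :
    ∃ α ∈ Ex I, ∃ β ∈ Ex J, α + β = γ := by
  rw [mul_eq_span hI hJ, Ex_span] at h
  obtain ⟨_, ⟨α, hα, β, hβ, rfl⟩, h⟩ := h
  obtain ⟨δ, rfl⟩ := exists_add_of_le h
  exact ⟨α, hα, β + δ, Ex_up hβ (by simp), by rw [add_assoc]⟩

lemma deg_mono (α : Fin s →₀ ℕ) : (monomial α (1 : K)).totalDegree = ∑ i, α i := by
  rw [totalDegree_monomial _ one_ne_zero, Finsupp.sum_fintype _ _ (by simp)]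

lemma trunc_eq {I : Ideal (MvPolynomial (Fin s) K)} (hI : IsMonomialIdeal I) (d : ℕ) :
    Ideal.span {f | f ∈ I ∧ f.totalDegree ≤ d} =
      Ideal.span ((fun α => monomial α (1 : K)) '' {α | α ∈ Ex I ∧ ∑ i, α i ≤ d}) := by
  apply le_antisymm
  · rw [Ideal.span_le]
    rintro f ⟨hf, hd⟩
    show f ∈ Ideal.span _
    rw [mem_ideal_span_monomial_image]
    intro α hα
    refine ⟨α, ⟨support_mem hI hf hα, le_trans ?_ hd⟩, le_rfl⟩
    have := le_totalDegree hα
    rwa [Finsupp.sum_fintype _ _ (by simp)] at this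
  · apply Ideal.span_mono
    rintro _ ⟨α, ⟨hα, hd⟩, rfl⟩
    exact ⟨hα, by rw [deg_mono]; exact hd⟩

/-- `I` is generated in degrees at most `d` -/
def GenLE (I : Ideal (MvPolynomial (Fin s) K)) (d : ℕ) : Prop :=
  I = Ideal.span {f | f ∈ I ∧ f.totalDegree ≤ d}

lemma genLE_of_le {I : Ideal (MvPolynomial (Fin s) K)} {d : ℕ}
    (h : I ≤ Ideal.span {f | f ∈ I ∧ f.totalDegree ≤ d}) : GenLE I d :=
  le_antisymm h (Ideal.span_le.mpr fun _ hf => hf.1)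

lemma GenLE.mono {I : Ideal (MvPolynomial (Fin s) K)} {d e : ℕ} (h : GenLE I d) (hde : d ≤ e) :
    GenLE I e := by
  apply genLE_of_le
  conv_lhs => rw [h]
  exact Ideal.span_mono fun f hf => ⟨hf.1, hf.2.trans hde⟩

lemma GenLE.mul {I J : Ideal (MvPolynomial (Fin s) K)} {d e : ℕ} (hI : GenLE I d)
    (hJ : GenLE J e) : GenLE (I * J) (d + e) := by
  apply genLE_of_le
  conv_lhs => rw [hI, hJ]
  rw [Ideal.span_mul_span']
  apply Ideal.span_mono
  rintro _ ⟨f, hf, g, hg, rfl⟩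
  exact ⟨Ideal.mul_mem_mul hf.1 hg.1, (totalDegree_mul _ _).trans (add_le_add hf.2 hg.2)⟩

lemma GenLE.pow {I : Ideal (MvPolynomial (Fin s) K)} {d : ℕ} (hI : GenLE I d) (n : ℕ) :
    GenLE (I ^ n) (n * d) := by
  induction n with
  | zero =>
    apply genLE_of_le
    rw [pow_zero, Ideal.one_eq_top, top_le_iff, Ideal.eq_top_iff_one]
    exact Ideal.subset_span ⟨trivial, by simp⟩
  | succ n ih => rw [pow_succ, Nat.succ_mul]; exact ih.mul hI

lemma exists_genLE (I : Ideal (MvPolynomial (Fin s) K)) : ∃ d, GenLE I d := by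
  obtain ⟨S, hS⟩ := (isNoetherianRing_iff_ideal_fg _).mp inferInstance I
  refine ⟨S.sup totalDegree, genLE_of_le ?_⟩
  conv_lhs => rw [← hS]
  apply Ideal.span_mono
  intro f hf
  exact ⟨hS ▸ Ideal.subset_span hf, Finset.le_sup (f := totalDegree) hf⟩

lemma genLE_max (I : Ideal (MvPolynomial (Fin s) K)) : GenLE I (maxGenDeg I) :=
  Nat.sInf_mem (s := {d | I = Ideal.span {f | f ∈ I ∧ f.totalDegree ≤ d}}) (exists_genLE I)

lemma GenLE.max_le {I : Ideal (MvPolynomial (Fin s) K)} {d : ℕ} (h : GenLE I d) :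
    maxGenDeg I ≤ d := Nat.sInf_le h

lemma GenLE.exists_Ex {I : Ideal (MvPolynomial (Fin s) K)} (hI : IsMonomialIdeal I) {d : ℕ}
    (h : GenLE I d) {γ : Fin s →₀ ℕ} (hγ : γ ∈ Ex I) :
    ∃ α ∈ Ex I, ∑ i, α i ≤ d ∧ α ≤ γ := by
  rw [GenLE, trunc_eq hI] at h
  rw [h, Ex_span] at hγ
  obtain ⟨α, ⟨h1, h2⟩, h3⟩ := hγ
  exact ⟨α, h1, h2, h3⟩

/-- minimal generators -/
def Gmin (I : Ideal (MvPolynomial (Fin s) K)) : Set (Fin s →₀ ℕ) :=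
  {α | α ∈ Ex I ∧ α ∉ Ex (Ideal.span (Set.range X) * I)}

lemma isMon_M : (Ideal.span (Set.range X) : Ideal (MvPolynomial (Fin s) K)) =
    Ideal.span ((fun α => monomial α (1 : K)) '' (Set.range fun i => Finsupp.single i 1)) := by
  rw [← Set.range_comp]; rfl

lemma Gmin_min {I : Ideal (MvPolynomial (Fin s) K)} {α β : Fin s →₀ ℕ} (hα : α ∈ Gmin I)
    (hβ : β ∈ Ex I) (h : β ≤ α) : β = α := by
  obtain ⟨γ, rfl⟩ := exists_add_of_le h
  by_contra hne
  have : γ ≠ 0 := by rintro rfl; simp at hne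
  obtain ⟨i, hi⟩ := Finsupp.ne_iff.mp this
  apply hα.2
  rw [add_comm]
  refine Ex_add ?_ hβ
  rw [isMon_M, Ex_span]
  refine ⟨_, ⟨i, rfl⟩, ?_⟩
  simp only [Finsupp.single_le_iff]
  simp at hi; omega

lemma Gmin_finite (I : Ideal (MvPolynomial (Fin s) K)) : (Gmin I).Finite := by
  apply WellQuasiOrderedLE.finite_of_isAntichain
  intro α hα β hβ hne hle
  exact hne (Gmin_min hβ hα.1 hle)

lemma exists_Gmin {I : Ideal (MvPolynomial (Fin s) K)} (hI : IsMonomialIdeal I)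
    {γ : Fin s →₀ ℕ} (hγ : γ ∈ Ex I) : ∃ α ∈ Gmin I, α ≤ γ := by
  obtain ⟨α, ⟨h1, h2⟩, h3⟩ := WellFounded.has_min (wellFounded_lt (α := Fin s →₀ ℕ))
    {α | α ∈ Ex I ∧ α ≤ γ} ⟨γ, hγ, le_rfl⟩
  refine ⟨α, ⟨h1, fun h => ?_⟩, h2⟩
  obtain ⟨μ, hμ, β, hβ, rfl⟩ := mem_Ex_mul ⟨_, isMon_M⟩ hI h
  have hle : β ≤ μ + β := by simp
  have := h3 β ⟨hβ, hle.trans h2⟩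
  have h4 : μ = 0 := by
    rcases hle.eq_or_lt with h | h
    · simpa using h
    · exact absurd h this
  subst h4
  rw [isMon_M, Ex_span] at hμ
  obtain ⟨_, ⟨i, rfl⟩, h⟩ := hμ
  simp at h

lemma exists_multiset {I : Ideal (MvPolynomial (Fin s) K)} (hI : IsMonomialIdeal I) (m : ℕ)
    {γ : Fin s →₀ ℕ} (hγ : γ ∈ Ex (I ^ m)) :
    ∃ T : Multiset (Fin s →₀ ℕ), T.card = m ∧ (∀ t ∈ T, t ∈ Gmin I) ∧ T.sum ≤ γ := by
  induction m generalizing γ with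
  | zero => exact ⟨0, by simp⟩
  | succ m ih =>
    rw [pow_succ'] at hγ
    obtain ⟨α, hα, β, hβ, rfl⟩ := mem_Ex_mul hI (isMon_pow hI m) hγ
    obtain ⟨T, h1, h2, h3⟩ := ih hβ
    obtain ⟨a, h4, h5⟩ := exists_Gmin hI hα
    refine ⟨a ::ₘ T, by simp [h1], ?_, ?_⟩
    · intro t ht
      rcases Multiset.mem_cons.mp ht with rfl | ht
      · exact h4
      · exact h2 t ht
    · rw [Multiset.sum_cons]; exact add_le_add h5 h3

lemma reduction_step {I J : Ideal (MvPolynomial (Fin s) K)} (hI : IsMonomialIdeal I)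
    (hJI : J ≤ I) (δ B : ℕ) (hB : 1 ≤ B)
    (hJ : ∀ α ∈ Ex I, ∑ i, α i ≤ δ → α ∈ Ex J)
    (hD : ∀ α ∈ Ex I, ∃ D, 1 ≤ D ∧ D ≤ B ∧ D • α ∈ Ex (J ^ D)) (n : ℕ)
    (hn : Set.ncard {α | α ∈ Gmin I ∧ δ < ∑ i, α i} * (B - 1) ≤ n) :
    I ^ (n + 1) = J * I ^ n := by
  classical
  apply le_antisymm
  · refine le_of_Ex (isMon_pow hI _) fun γ hγ => ?_
    obtain ⟨T, hT, hTG, hTs⟩ := exists_multiset hI _ hγ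
    refine Ex_up ?_ hTs
    by_cases h : ∃ t ∈ T, ∑ i, t i ≤ δ
    · obtain ⟨t, ht, htd⟩ := h
      obtain ⟨T', rfl⟩ := Multiset.exists_cons_of_mem ht
      rw [Multiset.sum_cons]
      refine Ex_add (hJ t (hTG t ht).1 htd) ?_
      have := Ex_multiset (I := I) T' (fun t ht => (hTG t (by simp [ht])).1)
      simp only [Multiset.card_cons, add_left_inj] at hT
      rwa [hT] at this
    · push Not at h
      have hfin : {α | α ∈ Gmin I ∧ δ < ∑ i, α i}.Finite := (Gmin_finite I).subset fun _ h => h.1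
      have hsub : T.toFinset ⊆ hfin.toFinset := by
        intro t ht
        rw [Multiset.mem_toFinset] at ht
        rw [Set.Finite.mem_toFinset]
        exact ⟨hTG t ht, h t ht⟩
      have hc : ∃ t ∈ T, B ≤ T.count t := by
        by_contra hcon
        push Not at hcon
        have h1 : T.card ≤ T.toFinset.card * (B - 1) := by
          rw [← Multiset.toFinset_sum_count_eq, ← smul_eq_mul]
          apply Finset.sum_le_card_nsmul
          intro t ht
          have := hcon t (Multiset.mem_toFinset.mp ht)
          omega
        have h2 := Finset.card_le_card hsub
        rw [← Set.ncard_eq_toFinset_card _ hfin] at h2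
        have h3 := Nat.mul_le_mul_right (B - 1) h2
        omega
      obtain ⟨t, ht, htc⟩ := hc
      obtain ⟨D, hD1, hDB, hDt⟩ := hD t (hTG t ht).1
      obtain ⟨T', rfl⟩ := Multiset.le_iff_exists_add.mp
        (Multiset.le_count_iff_replicate_le.mp (hDB.trans htc))
      rw [Multiset.sum_add, Multiset.sum_replicate]
      simp only [Multiset.card_add, Multiset.card_replicate] at hT
      have h1 := Ex_multiset (I := I) T' (fun t ht => (hTG t (by simp [ht])).1)
      have h2 := Ex_add hDt h1
      have h3 : J ^ D * I ^ T'.card ≤ J * I ^ n := by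
        obtain ⟨E, rfl⟩ := Nat.exists_eq_add_of_le' hD1
        rw [pow_succ', mul_assoc, show n = E + T'.card by omega, pow_add]
        exact Ideal.mul_mono le_rfl (Ideal.mul_mono (Ideal.pow_right_mono hJI _) le_rfl)
      exact h3 h2
  · rw [pow_succ']
    exact Ideal.mul_mono hJI le_rfl

end Mon

section Fin
variable {K : Type*} [Field K] {s : ℕ}

/-- exponent vector as a real vector -/
def cst (α : Fin s →₀ ℕ) : Fin s → ℝ := fun i => (α i : ℝ)

lemma cst_inj : Function.Injective (cst (s := s)) := by
  intro α β h
  ext i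
  have := congrFun h i
  simpa [cst] using this

lemma cst_add (α β : Fin s →₀ ℕ) : cst (α + β) = cst α + cst β := by
  ext i; simp [cst]

lemma cst_mem_NP {I : Ideal (MvPolynomial (Fin s) K)} {α : Fin s →₀ ℕ} (h : α ∈ Ex I) :
    cst α ∈ newtonPolyhedron s I := subset_convexHull ℝ _ ⟨α, h, rfl⟩

lemma one_case {I : Ideal (MvPolynomial (Fin s) K)} {β γ : Fin s →₀ ℕ}
    (hβ : cst β ∈ Set.extremePoints ℝ (newtonPolyhedron s I)) (hγ : γ ∈ Ex I) (h : γ ≤ β) :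
    γ = β := by
  obtain ⟨ρ, rfl⟩ := exists_add_of_le h
  rw [mem_extremePoints_iff_left] at hβ
  apply cst_inj
  refine hβ.2 _ (cst_mem_NP hγ) (cst (γ + (ρ + ρ))) (cst_mem_NP (Ex_up hγ (by simp))) ?_
  refine ⟨1 / 2, 1 / 2, by norm_num, by norm_num, by norm_num, ?_⟩
  ext i
  simp [cst]
  ring

lemma scale_mem {I : Ideal (MvPolynomial (Fin s) K)} (hI : IsMonomialIdeal I) (n : ℕ)
    {α : Fin s →₀ ℕ} (h : α ∈ Ex (I ^ (n + 1))) :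
    ((n : ℝ) + 1)⁻¹ • cst α ∈ newtonPolyhedron s I := by
  induction n generalizing α with
  | zero => simp only [zero_add, pow_one] at h; simpa using cst_mem_NP h
  | succ n ih =>
    rw [pow_succ] at h
    obtain ⟨α, hα, b, hb, rfl⟩ := mem_Ex_mul (isMon_pow hI _) hI h
    have h1 := convex_convexHull ℝ _ (ih hα) (cst_mem_NP hb)
      (a := ((n : ℝ) + 1) / (n + 2)) (b := 1 / ((n : ℝ) + 2)) (by positivity) (by positivity)
      (by field_simp; ring)
    unfold newtonPolyhedron
    convert h1 using 1
    ext i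
    simp only [cst_add, Pi.smul_apply, Pi.add_apply, smul_eq_mul]
    push_cast
    field_simp
    ring

lemma low {I : Ideal (MvPolynomial (Fin s) K)} (hI : IsMonomialIdeal I) {β : Fin s →₀ ℕ}
    (hβ : cst β ∈ Set.extremePoints ℝ (newtonPolyhedron s I)) (n : ℕ) {γ : Fin s →₀ ℕ}
    (hγ : γ ∈ Ex (I ^ n)) (h : γ ≤ n • β) : γ = n • β := by
  rcases n with _ | _ | n
  · simpa using h
  · simp only [zero_add, pow_one, one_smul] at *
    exact one_case hβ hγ h
  · rw [pow_succ] at hγ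
    obtain ⟨α, hα, b, hb, rfl⟩ := mem_Ex_mul (isMon_pow hI _) hI hγ
    obtain ⟨ρ, hρ⟩ := exists_add_of_le h
    have hβ' := (mem_extremePoints.mp hβ).2 _ (scale_mem hI n hα) (cst (b + ρ))
      (cst_mem_NP (Ex_up hb (by simp))) (by
        refine ⟨((n : ℝ) + 1) / (n + 2), 1 / ((n : ℝ) + 2), by positivity, by positivity,
          by field_simp; ring, ?_⟩
        ext i
        have := congrArg (fun f => (f i : ℝ)) hρ
        simp at this
        simp only [cst, Pi.add_apply, Pi.smul_apply, smul_eq_mul, Finsupp.add_apply]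
        push_cast
        field_simp
        linarith)
    obtain ⟨h1, h2⟩ := hβ'
    have h3 : b = β := one_case hβ hb (by
      have := cst_inj h2
      rw [← this]; simp)
    subst h3
    have h4 : α = (n + 1) • b := by
      ext i
      have := congrFun h1 i
      simp only [cst, Pi.smul_apply, smul_eq_mul] at this
      have h5 : ((n : ℝ) + 1) ≠ 0 := by positivity
      field_simp at this
      simp only [Finsupp.smul_apply, smul_eq_mul]
      exact_mod_cast this
    rw [h4, ← succ_nsmul]

lemma key_D {I J : Ideal (MvPolynomial (Fin s) K)} (hI : IsMonomialIdeal I) (hpr : I ≠ ⊤)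
    (δ : ℕ) (hδ1 : 1 ≤ δ)
    (hδ : ∀ β : Fin s →₀ ℕ, cst β ∈ Set.extremePoints ℝ (newtonPolyhedron s I) → ∑ i, β i ≤ δ)
    (hJ : ∀ α ∈ Ex I, ∑ i, α i ≤ δ → α ∈ Ex J) (g : Fin s →₀ ℕ) (hg : g ∈ Ex I) :
    ∃ D, 1 ≤ D ∧ D ≤ δ ^ s ∧ D • g ∈ Ex (J ^ D) := by
  classical
  let P : Finset (Fin s →₀ ℕ) := (Gmin_finite I).toFinset
  have hP : ∀ p ∈ P, p ∈ Ex I := fun p hp => ((Gmin_finite I).mem_toFinset.mp hp).1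
  obtain ⟨V, hVP, hV, hVe⟩ := exists_extreme_upHull (P.image cst) (newtonPolyhedron s I)
    (by
      intro x hx
      rw [Finset.mem_coe, Finset.mem_image] at hx
      obtain ⟨p, hp, rfl⟩ := hx
      exact cst_mem_NP (hP p hp))
    (by
      refine convexHull_min ?_ (upHull_convex _)
      rintro _ ⟨α, hα, rfl⟩
      obtain ⟨p, hp, hpα⟩ := exists_Gmin hI hα
      refine upHull_up (subset_upHull _ (a := cst p) ?_) ?_
      · rw [Finset.mem_coe, Finset.mem_image]
        exact ⟨p, (Gmin_finite I).mem_toFinset.mpr hp, rfl⟩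
      · intro i
        have := hpα i
        simp only [cst]
        exact_mod_cast this)
  obtain ⟨V', hV'P, rfl⟩ := Finset.subset_image_iff.mp hVP
  have hV'd : ∀ v ∈ V', ∑ i, v i ≤ δ := fun v hv => hδ v (hVe _ (Finset.mem_image_of_mem _ hv))
  obtain ⟨u, hu, hug⟩ := hV (cst_mem_NP hg)
  rw [Finset.mem_convexHull'] at hu
  obtain ⟨w, hw0, hw1, hwu⟩ := hu
  rw [Finset.sum_image (fun _ _ _ _ h => cst_inj h)] at hw1 hwu
  obtain ⟨D, hD1, hDδ, n, hn1, hn2⟩ := lp_int (ι := V' ⊕ Fin s)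
    (Sum.elim (fun v j => (v : Fin s →₀ ℕ) j) (fun i j => if i = j then 1 else 0))
    (Sum.elim (fun _ => 1) (fun _ => 0))
    (by
      rintro (v | i) h
      · apply hpr
        rw [← zero_mem_Ex_top]
        have h0 : (v : Fin s →₀ ℕ) = 0 := by
          ext j; exact congrFun h j
        rw [← h0]
        exact hP _ (hV'P v.2)
      · have := congrFun h i
        simp at this)
    δ
    (by
      rintro (v | i)
      · exact hV'd v v.2
      · simpa using hδ1)
    (by
      intro x _
      have : x = ∑ i : Fin s, x i • (fun j => if i = j then (1 : ℝ) else 0) := by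
        ext j
        simp [Finset.sum_apply]
      rw [this]
      refine Submodule.sum_mem _ fun i _ => Submodule.smul_mem _ _ (Submodule.subset_span ?_)
      refine ⟨Sum.inr i, ?_⟩
      ext j
      simp)
    g
    (Sum.elim (fun v => w (cst v)) (fun i => g i - u i))
    (by
      rintro (v | i)
      · exact hw0 _ (Finset.mem_image_of_mem _ v.2)
      · have := hug i
        simp only [cst] at this
        simpa using this)
    (by
      intro j
      rw [Fintype.sum_sum_type]
      have h1 := congrFun hwu j
      simp only [Finset.sum_apply, Pi.smul_apply, smul_eq_mul, cst] at h1
      rw [← Finset.sum_coe_sort] at h1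
      simp only [Sum.elim_inl, Sum.elim_inr, cst]
      rw [h1]
      simp)
    (by
      rw [Fintype.sum_sum_type]
      rw [← Finset.sum_coe_sort] at hw1
      simp only [Sum.elim_inl, Sum.elim_inr, Nat.cast_one, one_mul, Nat.cast_zero, zero_mul,
        Finset.sum_const_zero, add_zero]
      exact hw1.ge)
  refine ⟨D, hD1, hDδ, ?_⟩
  have h1 := Ex_sum (I := J) (Finset.univ : Finset V') (fun v => n (Sum.inl v))
    (fun v => (v : Fin s →₀ ℕ)) (fun v _ => hJ _ (hP _ (hV'P v.2)) (hV'd v v.2))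
  refine Ex_up (Ideal.pow_le_pow_right (m := D) ?_ h1) ?_
  · rw [Fintype.sum_sum_type] at hn2
    simpa using hn2
  · intro j
    have := hn1 j
    rw [Fintype.sum_sum_type] at this
    simp only [Sum.elim_inl] at this
    rw [Finsupp.smul_apply, smul_eq_mul, ← this, Finsupp.finsetSum_apply]
    simp

end Fin

/-- for a monomial ideal `I`, with `δ = δ(I)` the maximal ℓ¹-norm of a
vertex of the Newton polyhedron, `q` the number of minimal (monomial) generators of
degree `> δ`, `J = (I_{≤δ})` and `r(I)` the corresponding reduction number:
(i) `p(I) = δ(I)`, i.e. `d(I^n) = δn + q₀` for some `q₀` and all `n ≫ 0`;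
(ii) `r(I) ≤ q·s^{s/2}δ^s − q`;
(iii) `d(I^n) − δn ≤ q(s^{s/2}δ^s − 1)(d(I) − δ)` for all `n ≥ 1`. -/
theorem delta_is_leading_coefficient_and_bounds
    {K : Type*} [Field K] (s : ℕ) (I : Ideal (MvPolynomial (Fin s) K))
    (hI : IsMonomialIdeal I) (hne : I ≠ ⊥) (hpr : I ≠ ⊤)
    (δ : ℕ)
    (hδ : IsGreatest ((fun x : Fin s → ℝ => ∑ i, x i) ''
      Set.extremePoints ℝ (newtonPolyhedron s I)) (δ : ℝ))
    (M : Ideal (MvPolynomial (Fin s) K)) (hM : M = Ideal.span (Set.range X))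
    (q : ℕ)
    (hq : q = Set.ncard {α : Fin s →₀ ℕ |
      monomial α (1 : K) ∈ I ∧ monomial α (1 : K) ∉ M * I ∧
        δ < (monomial α (1 : K)).totalDegree})
    (J : Ideal (MvPolynomial (Fin s) K))
    (hJ : J = Ideal.span {g | g ∈ I ∧ g.totalDegree ≤ δ})
    (r : ℕ) (hr : r = sInf {n | I ^ (n + 1) = J * I ^ n}) :
    (∃ q₀ N : ℕ, ∀ n ≥ N, maxGenDeg (I ^ n) = δ * n + q₀) ∧
    ((r : ℝ) ≤ q * ((s : ℝ) ^ ((s : ℝ) / 2) * (δ : ℝ) ^ s) - q) ∧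
    (∀ n : ℕ, 1 ≤ n → (maxGenDeg (I ^ n) : ℝ) ≤
      (δ : ℝ) * n + q * ((s : ℝ) ^ ((s : ℝ) / 2) * (δ : ℝ) ^ s - 1) *
        ((maxGenDeg I : ℝ) - δ)) := by
  classical
  set B := δ ^ s with hB
  have hJE : ∀ α ∈ Ex I, ∑ i, α i ≤ δ → α ∈ Ex J := by
    intro α hα hd
    show monomial α (1 : K) ∈ J
    rw [hJ]
    exact Ideal.subset_span ⟨hα, by rw [deg_mono]; exact hd⟩
  have hJI : J ≤ I := by
    rw [hJ, Ideal.span_le]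
    exact fun _ h => h.1
  have hJG : GenLE J δ := by
    apply genLE_of_le
    conv_lhs => rw [hJ]
    apply Ideal.span_mono
    intro f hf
    refine ⟨?_, hf.2⟩
    rw [hJ]
    exact Ideal.subset_span hf
  -- the vertex of maximal degree
  obtain ⟨⟨x, hx, hxδ⟩, hub⟩ := hδ
  obtain ⟨β, hβI, rfl⟩ := extremePoints_convexHull_subset hx
  change cst β ∈ _ at hx
  have hβδ : ∑ i, β i = δ := by
    have : ((∑ i, β i : ℕ) : ℝ) = (δ : ℝ) := by
      push_cast; exact hxδ
    exact_mod_cast this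
  have hs1 : 1 ≤ s := by
    rcases Nat.eq_zero_or_pos s with h | h
    · subst h
      exfalso
      apply hpr
      rw [← zero_mem_Ex_top]
      have : β = 0 := Subsingleton.elim _ _
      rw [← this]; exact hβI
    · exact h
  have hδ1 : 1 ≤ δ := by
    by_contra hcon
    apply hpr
    rw [← zero_mem_Ex_top]
    have : β = 0 := by
      ext i
      have := Finset.single_le_sum (f := fun i => β i) (fun i _ => Nat.zero_le _)
        (Finset.mem_univ i)
      simp only [Finsupp.coe_zero, Pi.zero_apply]
      omega
    rw [← this]; exact hβI
  have hub' : ∀ β : Fin s →₀ ℕ, cst β ∈ Set.extremePoints ℝ (newtonPolyhedron s I) →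
      ∑ i, β i ≤ δ := by
    intro β hβ
    have h1 := hub ⟨_, hβ, rfl⟩
    have h2 : ((∑ i, β i : ℕ) : ℝ) ≤ (δ : ℝ) := by
      push_cast; exact h1
    exact_mod_cast h2
  have hB1 : 1 ≤ B := Nat.one_le_pow _ _ hδ1
  have hqs : q = Set.ncard {α | α ∈ Gmin I ∧ δ < ∑ i, α i} := by
    rw [hq]
    congr 1
    ext α
    rw [Set.mem_setOf_eq, deg_mono, hM]
    exact and_assoc.symm
  set R := q * (B - 1) with hR
  have hred : ∀ n, R ≤ n → I ^ (n + 1) = J * I ^ n := by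
    intro n hn
    refine reduction_step hI hJI δ B hB1 hJE (key_D hI hpr δ hδ1 hub' hJE) n ?_
    rw [← hqs]; exact hn
  have hrR : r ≤ R := by
    rw [hr]
    exact Nat.sInf_le (hred R le_rfl)
  have hlow : ∀ n, δ * n ≤ maxGenDeg (I ^ n) := by
    intro n
    obtain ⟨γ, h1, h2, h3⟩ := (genLE_max (I ^ n)).exists_Ex (isMon_pow hI n) (Ex_nsmul hβI n)
    rw [low hI hx n h1 h3] at h2
    refine le_trans (le_of_eq ?_) h2
    simp only [Finsupp.smul_apply, smul_eq_mul]
    rw [← Finset.mul_sum, hβδ, mul_comm]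
  have hstep : ∀ n, R ≤ n → maxGenDeg (I ^ (n + 1)) ≤ δ + maxGenDeg (I ^ n) := by
    intro n hn
    apply GenLE.max_le
    rw [hred n hn]
    exact hJG.mul (genLE_max _)
  have hpowR : ∀ k, maxGenDeg (I ^ (R + k)) ≤ δ * k + R * maxGenDeg I := by
    intro k
    induction k with
    | zero => simpa using ((genLE_max I).pow R).max_le
    | succ k ih =>
      have := hstep (R + k) (by omega)
      rw [← add_assoc, Nat.mul_succ]
      omega
  have hdδ : 0 < q → δ < maxGenDeg I := by
    intro hq0
    rw [hqs] at hq0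
    obtain ⟨α, hα, hαd⟩ := Set.nonempty_of_ncard_ne_zero hq0.ne'
    obtain ⟨γ, h1, h2, h3⟩ := (genLE_max I).exists_Ex hI hα.1
    rw [Gmin_min hα h1 h3] at h2
    omega
  have hBR : (B : ℝ) ≤ (s : ℝ) ^ ((s : ℝ) / 2) * (δ : ℝ) ^ s := by
    rw [hB]
    push_cast
    apply le_mul_of_one_le_left (by positivity)
    exact Real.one_le_rpow (by exact_mod_cast hs1) (by positivity)
  have hRR : (R : ℝ) ≤ q * ((s : ℝ) ^ ((s : ℝ) / 2) * (δ : ℝ) ^ s - 1) := by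
    rw [hR, Nat.cast_mul, Nat.cast_sub hB1]
    apply mul_le_mul_of_nonneg_left _ (Nat.cast_nonneg _)
    push_cast
    linarith
  refine ⟨?_, ?_, ?_⟩
  · obtain ⟨N, hN, hmin⟩ := WellFounded.has_min (measure (fun n => maxGenDeg (I ^ n) - δ * n)).wf
      {n | R ≤ n} ⟨R, le_refl R⟩
    refine ⟨maxGenDeg (I ^ N) - δ * N, N, fun n hn => ?_⟩
    have h1 : maxGenDeg (I ^ n) - δ * n ≤ maxGenDeg (I ^ N) - δ * N := by
      induction n, hn using Nat.le_induction with
      | base => exact le_rfl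
      | succ n hn ih =>
        have := hstep n (le_trans hN hn)
        rw [Nat.mul_succ]
        omega
    have h2 : ¬ (maxGenDeg (I ^ n) - δ * n < maxGenDeg (I ^ N) - δ * N) :=
      hmin n (le_trans hN hn)
    have := hlow n
    omega
  · have : (r : ℝ) ≤ R := by exact_mod_cast hrR
    linarith
  · intro n _
    have hmain : (maxGenDeg (I ^ n) : ℝ) ≤ δ * n + R * ((maxGenDeg I : ℝ) - δ) := by
      rcases le_total R n with h | h
      · obtain ⟨k, rfl⟩ := Nat.exists_eq_add_of_le h
        have h1 : (maxGenDeg (I ^ (R + k)) : ℝ) ≤ δ * k + R * maxGenDeg I := by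
          exact_mod_cast hpowR k
        push_cast
        linarith
      · have h1 : (maxGenDeg (I ^ n) : ℝ) ≤ n * maxGenDeg I := by
          exact_mod_cast ((genLE_max I).pow n).max_le
        have h2 : (n : ℝ) ≤ R := by exact_mod_cast h
        rcases Nat.eq_zero_or_pos q with h0 | h0
        · have : R = 0 := by rw [hR, h0, zero_mul]
          have hn0 : n = 0 := by omega
          subst hn0
          rw [this]
          simpa using h1
        · have h3 : (δ : ℝ) ≤ maxGenDeg I := by exact_mod_cast (hdδ h0).le
          have := mul_le_mul_of_nonneg_right h2 (sub_nonneg.mpr h3)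
          linarith
    refine hmain.trans (add_le_add le_rfl ?_)
    rcases Nat.eq_zero_or_pos q with h0 | h0
    · have : R = 0 := by rw [hR, h0, zero_mul]
      rw [this, h0]; simp
    · have h3 : (δ : ℝ) ≤ maxGenDeg I := by exact_mod_cast (hdδ h0).le
      exact mul_le_mul_of_nonneg_right hRR (sub_nonneg.mpr h3)
end

section
/- Let s ≥ 3, δ ≥ s+1, and I = (M_1,...,M_s, M) ⊂ K[X_1,...,X_s,Y] as in Example (with M_i = X^{(δ−1)e_i + e_{i+1}} cyclically and M = X_1^{δ−s+1}X_2⋯X_s Y^a for a ≥ 1). Then for all 1 ≤ t ≤ r(I) and n ≥ 0, the monomial M^t M_1^n is a minimal generator of I^{t+n}; consequently ε(I;n) = an for n ≤ r(I)−1 and ε(I;n) = r(I)·a for n ≥ r(I), so the stability index gstab(I) = r(I) > (δ−1)^{s−2}. -/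
open MvPolynomial

namespace DegEx
open Finsupp

def vv (s δ : ℕ) [NeZero s] (i : Fin s) : ℕ := if i = 0 then δ - s + 1 else 1

def QQ (s δ : ℕ) [NeZero s] : Set ℕ :=
  {q | 1 ≤ q ∧ ∃ c : Fin s → ℕ, ∀ i, q * vv s δ i = (δ - 1) * c i + c (i - 1)}

lemma QQ_low (s δ : ℕ) [NeZero s] (hs : 3 ≤ s) (hδ : s + 1 ≤ δ) (q : ℕ) (hq : q ∈ QQ s δ) :
    (δ - 1) ^ (s - 2) + 2 ≤ q := by
  obtain ⟨hq1, c, hc⟩ := hq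
  obtain ⟨k, rfl⟩ : ∃ k, s = k + 3 := ⟨s - 3, by omega⟩
  obtain ⟨d, rfl⟩ : ∃ d, δ = d + 1 := ⟨δ - 1, by omega⟩
  simp only [Nat.add_sub_cancel] at hc ⊢
  have hk : k + 3 - 2 = k + 1 := by omega
  rw [hk]
  set C : ℕ → ℤ := fun j => (c (Fin.ofNat (k+3) j) : ℤ) with hC
  have hCn : ∀ j, 0 ≤ C j := fun j => by simp [hC]
  have rowj : ∀ j, 1 ≤ j → j ≤ k + 2 → (q : ℤ) = d * C j + C (j - 1) := by
    intro j h1 h2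
    have h := hc (Fin.ofNat (k+3) j)
    have hne : (Fin.ofNat (k+3) j) ≠ 0 := by
      intro h0
      have := congrArg Fin.val h0
      simp [Fin.ofNat, Nat.mod_eq_of_lt (show j < k + 3 by omega)] at this
      omega
    have hsub : (Fin.ofNat (k+3) j) - 1 = Fin.ofNat (k+3) (j-1) := by
      apply Fin.ext
      rw [Fin.val_sub_one_of_ne_zero hne]
      simp only [Fin.ofNat]
      rw [Nat.mod_eq_of_lt (show j < k + 3 by omega), Nat.mod_eq_of_lt (show j - 1 < k + 3 by omega)]
    rw [hsub] at h
    simp only [vv, if_neg hne, mul_one] at h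
    simp only [hC]
    exact_mod_cast h
  have row0 : (q : ℤ) * (d - k - 1) = d * C 0 + C (k + 2) := by
    have h := hc 0
    have hsub : (0 : Fin (k+3)) - 1 = Fin.ofNat (k+3) (k+2) := by
      apply Fin.ext
      rw [Fin.coe_sub_one]
      simp [Fin.ofNat]
    rw [hsub] at h
    simp only [vv, if_true] at h
    have h' : ((d + 1 - (k + 3) + 1 : ℕ) : ℤ) = d - k - 1 := by omega
    rw [← h']
    simp only [hC]
    exact_mod_cast h
  clear_value C
  have chain : ∀ j, j ≤ k + 2 → (d + 1) * C (k + 2 - j) - q = (-(d:ℤ)) ^ j * ((d + 1) * C (k + 2) - q) := by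
    intro j
    induction j with
    | zero => intro _; simp
    | succ j ih =>
      intro h
      have h1 := ih (by omega)
      have h2 := rowj (k + 2 - j) (by omega) (by omega)
      rw [show k + 2 - j - 1 = k + 2 - (j+1) by omega] at h2
      rw [pow_succ, mul_right_comm, ← h1]
      linear_combination (-(d:ℤ) - 1) * h2
  have hd : (k:ℤ) + 3 ≤ d := by omega
  have hqz : (1:ℤ) ≤ q := by exact_mod_cast hq1
  have r1 := rowj 1 le_rfl (by omega)
  simp only [Nat.sub_self] at r1
  have E0 : (d + 1) * C (k + 2) - q ≠ 0 := by
    intro h0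
    have h := chain (k+2) le_rfl
    rw [h0] at h
    simp at h
    have : (q:ℤ) * (d + 1) = (q * (d - k - 1)) * (d+1) := by rw [row0]; linear_combination (-(d:ℤ)) * h - h0
    have h3 : (q:ℤ) * (d+1) * (d - k - 2) = 0 := by linear_combination -this
    have h4 : (0:ℤ) < (q:ℤ) * (d+1) * (d - k - 2) := by
      apply mul_pos (mul_pos _ _) <;> omega
    omega
  have h := chain (k+1) (by omega)
  rw [show k + 2 - (k+1) = 1 by omega] at h
  have habs : (d:ℤ) ^ (k+1) ≤ |C 1 - C 0| := by
    have : C 1 - C 0 = (d + 1) * C 1 - q := by rw [r1]; ring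
    rw [this, h, abs_mul, abs_pow, abs_neg, Nat.abs_cast]
    have : 1 ≤ |(d + 1) * C (k + 2) - q| := Int.one_le_abs E0
    nlinarith [pow_nonneg (Int.natCast_nonneg d) (k+1)]
  have hp : (d:ℤ) ≤ d ^ (k+1) := by
    rw [pow_succ]
    have : (1:ℤ) ≤ (d:ℤ)^k := one_le_pow₀ (by omega)
    nlinarith
  have goal : (d:ℤ)^(k+1) + 2 ≤ q := by
    rcases abs_cases (C 1 - C 0) with ⟨e, _⟩ | ⟨e, _⟩
    · have := hCn 0
      have := hCn 1
      nlinarith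
    · rcases (hCn 1).lt_or_eq with h1 | h1
      · nlinarith
      · exfalso
        rw [← h1] at r1
        have := hCn (k+2)
        simp at r1
        rw [← r1] at row0
        nlinarith
  exact_mod_cast goal

lemma QQ_nonempty (s δ : ℕ) [NeZero s] (hs : 3 ≤ s) (hδ : s + 1 ≤ δ) : (QQ s δ).Nonempty := by
  obtain ⟨k, rfl⟩ : ∃ k, s = k + 3 := ⟨s - 3, by omega⟩
  obtain ⟨d, rfl⟩ : ∃ d, δ = d + 1 := ⟨δ - 1, by omega⟩
  have hd : (k:ℤ) + 3 ≤ d := by omega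
  obtain ⟨N, hN⟩ : ∃ N : ℤ, N = 1 - (-(d:ℤ))^(k+3) := ⟨_, rfl⟩
  have hpk : (1:ℤ) ≤ (d:ℤ)^(k+1) := one_le_pow₀ (by omega)
  have hNabs : (d:ℤ)^(k+3) - 1 ≤ |N| := by
    have h1 : |(-(d:ℤ))^(k+3)| = (d:ℤ)^(k+3) := by rw [abs_pow, abs_neg, Nat.abs_cast]
    have := abs_sub_abs_le_abs_sub ((-(d:ℤ))^(k+3)) 1
    rw [h1, abs_one, abs_sub_comm] at this
    rw [hN]; exact this
  have hpk3 : (d:ℤ)^(k+3) = d^(k+1) * (d*d) := by ring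
  have hbig : ∀ j, j ≤ k + 1 → (d:ℤ)^j * ((d+1) * (d - k - 2)) ≤ |N| := by
    intro j hj
    have h1 : (d:ℤ)^j ≤ d^(k+1) := pow_le_pow_right₀ (by omega) hj
    have h2 : ((d:ℤ)+1) * (d - k - 2) ≤ d*d - d - 2 := by nlinarith
    have h3 : (0:ℤ) ≤ (d+1) * (d - k - 2) := by apply mul_nonneg <;> omega
    have h4 : (d:ℤ)^j * ((d+1) * (d - k - 2)) ≤ d^(k+1) * (d*d - d - 2) := by
      apply mul_le_mul h1 h2 h3; positivity
    nlinarith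
  have hNpos : 1 ≤ |N| := by
    rw [hpk3] at hNabs
    nlinarith
  have hNsq : |N| * |N| = N * N := abs_mul_abs_self N
  -- c
  obtain ⟨C, hC⟩ : ∃ C : ℕ → ℤ, ∀ j, C j = N*N + (-(d:ℤ))^(k+2-j) * (N * ((d+1) * (d-k-2))) := ⟨fun j => _, fun j => rfl⟩
  have hrow : ∀ j, 1 ≤ j → j ≤ k+2 → (d+1) * (N*N) = d * C j + C (j-1) := by
    intro j h1 h2
    rw [hC, hC, show k + 2 - (j-1) = (k+2-j)+1 by omega, pow_succ]
    ring
  have hrow0 : (d+1) * (N*N) * (d-k-1) = d * C 0 + C (k+2) := by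
    rw [hC, hC, Nat.sub_self, Nat.sub_zero, pow_zero]
    have : (-(d:ℤ))^(k+2) * d = N - 1 := by rw [hN]; ring
    linear_combination (-(N * ((d+1) * (d-k-2)))) * this
  have hCpos : ∀ j, 1 ≤ j → 0 ≤ C j := by
    intro j hj
    rw [hC]
    have h1 := hbig (k+2-j) (by omega)
    have h3 : (0:ℤ) ≤ (d+1) * (d - k - 2) := by apply mul_nonneg <;> omega
    have h2 : |(-(d:ℤ))^(k+2-j) * (N * ((d+1) * (d-k-2)))| ≤ |N| * |N| := by
      rw [abs_mul, abs_mul, abs_pow, abs_neg, Nat.abs_cast, abs_of_nonneg h3]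
      nlinarith
    have := neg_abs_le ((-(d:ℤ))^(k+2-j) * (N * ((d+1) * (d-k-2))))
    linarith
  have hC0 : 0 ≤ C 0 := by
    have h1 := hrow (k+2) (by omega) le_rfl
    have h2 := hCpos (k+2-1) (by omega)
    have h3 := hCpos (k+2) (by omega)
    have h4 : (0:ℤ) ≤ (d+1) * (N*N) := by nlinarith
    by_contra hneg
    push Not at hneg
    nlinarith
  have hCn : ∀ j, 0 ≤ C j := fun j => by
    rcases Nat.eq_zero_or_pos j with rfl | h
    · exact hC0
    · exact hCpos j h
  clear hC
  lift C to ℕ → ℕ using hCn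
  have hq : 0 ≤ (d+1) * (N*N) := by nlinarith
  refine ⟨((d+1) * (N*N)).toNat, ?_, fun i => C i.val, ?_⟩
  · have : 1 ≤ (d+1) * (N*N) := by nlinarith
    omega
  · intro i
    simp only [Nat.add_sub_cancel]
    zify
    rw [Int.toNat_of_nonneg hq]
    by_cases hi : i = 0
    · subst hi
      rw [Fin.coe_sub_one]
      simp only [vv, if_true]
      have h' : ((d + 1 - (k + 3) + 1 : ℕ) : ℤ) = d - k - 1 := by omega
      rw [h']
      exact hrow0
    · rw [Fin.coe_sub_one]
      simp only [vv, if_neg hi]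
      have h1 : 1 ≤ i.val := Nat.one_le_iff_ne_zero.2 (fun h => hi (Fin.ext h))
      have := hrow i.val h1 (by omega)
      simpa using this

noncomputable def gE (s δ : ℕ) [NeZero s] (i : Fin s) : Fin (s + 1) →₀ ℕ :=
  single (Fin.castSucc i) (δ - 1) + single (Fin.castSucc (i + 1)) 1

noncomputable def mE (s δ a : ℕ) [NeZero s] : Fin (s + 1) →₀ ℕ :=
  single 0 (δ - s) + ∑ i : Fin s, single (Fin.castSucc i) 1 + single (Fin.last s) a

noncomputable def ex (s δ a : ℕ) [NeZero s] (t : ℕ) (c : Fin s → ℕ) : Fin (s + 1) →₀ ℕ :=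
  t • mE s δ a + ∑ i, c i • gE s δ i

section
variable (s δ a : ℕ) [NeZero s]

lemma gE_last (i : Fin s) : gE s δ i (Fin.last s) = 0 := by
  simp [gE, Finsupp.single_apply, (Fin.castSucc_lt_last _).ne]

lemma mE_last : mE s δ a (Fin.last s) = a := by
  have h0 : (0 : Fin (s+1)) ≠ Fin.last s := by
    intro h; have := congrArg Fin.val h; simp at this; exact NeZero.ne s this.symm
  simp [mE, Finsupp.single_apply, (Fin.castSucc_lt_last _).ne, h0]

lemma gE_cast (i j : Fin s) : gE s δ j (Fin.castSucc i) =
    (if j = i then δ - 1 else 0) + (if j = i - 1 then 1 else 0) := by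
  simp only [gE, Finsupp.add_apply, Finsupp.single_apply, eq_sub_iff_add_eq, Fin.castSucc_inj]

lemma mE_cast (i : Fin s) : mE s δ a (Fin.castSucc i) = vv s δ i := by
  have h0 : (0 : Fin (s+1)) = Fin.castSucc (0 : Fin s) := by simp
  have h1 : Fin.last s ≠ Fin.castSucc i := (Fin.castSucc_lt_last _).ne'
  simp only [mE, h0, Finsupp.add_apply, Finsupp.single_apply, Finsupp.finsetSum_apply, h1,
    if_false, Fin.castSucc_inj, vv]
  by_cases h : i = 0
  · subst h; simp
  · simp [h, Ne.symm h]

lemma ex_last (t : ℕ) (c : Fin s → ℕ) : ex s δ a t c (Fin.last s) = a * t := by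
  simp [ex, gE_last, mE_last, Finsupp.finsetSum_apply, mul_comm]

lemma ex_cast (t : ℕ) (c : Fin s → ℕ) (i : Fin s) : ex s δ a t c (Fin.castSucc i) =
    t * vv s δ i + ((δ - 1) * c i + c (i - 1)) := by
  simp [ex, gE_cast, mE_cast, Finsupp.finsetSum_apply, mul_add, Finset.sum_add_distrib, mul_comm]

lemma sum_vv (hs : 3 ≤ s) (hδ : s + 1 ≤ δ) : ∑ i, vv s δ i = δ := by
  have : ∀ i : Fin s, vv s δ i = (if i = 0 then δ - s else 0) + 1 := by
    intro i; unfold vv; split_ifs <;> simp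
  simp [this, Finset.sum_add_distrib]
  omega

lemma sum_shift (c : Fin s → ℕ) : ∑ i, c (i - 1) = ∑ i, c i :=
  Equiv.sum_comp (Equiv.subRight (1 : Fin s)) c

lemma sum_row (hs : 3 ≤ s) (hδ : s + 1 ≤ δ) (c : Fin s → ℕ) :
    ∑ i, ((δ - 1) * c i + c (i - 1)) = δ * ∑ i, c i := by
  rw [Finset.sum_add_distrib, sum_shift, ← Finset.mul_sum]
  obtain ⟨d, rfl⟩ : ∃ d, δ = d + 1 := ⟨δ - 1, by omega⟩
  simp; ring

lemma ex_sum (hs : 3 ≤ s) (hδ : s + 1 ≤ δ) (t : ℕ) (c : Fin s → ℕ) :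
    ∑ i : Fin s, ex s δ a t c (Fin.castSucc i) = δ * (t + ∑ i, c i) := by
  simp only [ex_cast]
  rw [Finset.sum_add_distrib, sum_row s δ hs hδ, ← Finset.mul_sum, sum_vv s δ hs hδ]
  ring

lemma degree_ex (hs : 3 ≤ s) (hδ : s + 1 ≤ δ) (t : ℕ) (c : Fin s → ℕ) :
    (ex s δ a t c).degree = δ * (t + ∑ i, c i) + a * t := by
  rw [Finsupp.degree_eq_sum, Fin.sum_univ_castSucc, ex_sum s δ a hs hδ, ex_last]

/-- divisibility among generators forces equality of the `X`-parts -/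
lemma ex_le (hs : 3 ≤ s) (hδ : s + 1 ≤ δ) (ha : 1 ≤ a) {t t' : ℕ} {c c' : Fin s → ℕ}
    (hsum : t' + ∑ i, c' i = t + ∑ i, c i) (h : ex s δ a t' c' ≤ ex s δ a t c) :
    t' ≤ t ∧ ∀ i, t' * vv s δ i + ((δ - 1) * c' i + c' (i - 1)) =
      t * vv s δ i + ((δ - 1) * c i + c (i - 1)) := by
  constructor
  · have := h (Fin.last s)
    rw [ex_last, ex_last] at this
    exact Nat.le_of_mul_le_mul_left this ha
  · have h1 : ∑ i : Fin s, ex s δ a t' c' (Fin.castSucc i)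
        = ∑ i : Fin s, ex s δ a t c (Fin.castSucc i) := by
      rw [ex_sum s δ a hs hδ, ex_sum s δ a hs hδ, hsum]
    have h2 := (Finset.sum_eq_sum_iff_of_le (fun i _ => h (Fin.castSucc i))).1 h1
    intro i
    have := h2 i (Finset.mem_univ _)
    rwa [ex_cast, ex_cast] at this

lemma QQ_sum (hs : 3 ≤ s) (hδ : s + 1 ≤ δ) (q : ℕ) (c : Fin s → ℕ)
    (h : ∀ i, q * vv s δ i = (δ - 1) * c i + c (i - 1)) : ∑ i, c i = q := by
  have h1 : ∑ i, q * vv s δ i = ∑ i, ((δ - 1) * c i + c (i - 1)) :=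
    Finset.sum_congr rfl (fun i _ => h i)
  rw [sum_row s δ hs hδ, ← Finset.mul_sum, sum_vv s δ hs hδ, mul_comm] at h1
  exact (Nat.eq_of_mul_eq_mul_left (by omega) h1).symm

/-- the combinatorial core -/
lemma core (hs : 3 ≤ s) (hδ : s + 1 ≤ δ) (ha : 1 ≤ a) {t t' n : ℕ} {c' : Fin s → ℕ}
    (hsum : t' + ∑ i, c' i = t + n) (h : ex s δ a t' c' ≤ ex s δ a t (Pi.single 0 n))
    (ht : ∀ q ∈ QQ s δ, t < q) : t' = t := by
  obtain ⟨hle, hrow⟩ := ex_le s δ a hs hδ ha (by simpa using hsum) h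
  by_contra hne
  have hlt : t' < t := by omega
  obtain ⟨q, rfl⟩ : ∃ q, t = t' + q := ⟨t - t', by omega⟩
  obtain ⟨k, rfl⟩ : ∃ k, s = k + 3 := ⟨s - 3, by omega⟩
  have h1 : (0 - 1 : Fin (k+3)) ≠ 0 := by
    intro h; have := congrArg Fin.val h; rw [Fin.coe_sub_one] at this; simp at this
  have h2 : (0 - 1 - 1 : Fin (k+3)) ≠ 0 := by
    intro h; have := congrArg Fin.val h
    rw [Fin.coe_sub_one, if_neg h1, Fin.coe_sub_one] at this; simp at this
  have r0 := hrow 0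
  have r1 := hrow (0 - 1)
  simp only [Pi.single_eq_same, Pi.single_eq_of_ne h1, Pi.single_eq_of_ne h2] at r0 r1
  simp only [vv, if_true, if_neg h1] at r0 r1
  have hn : n ≤ c' 0 := by
    by_contra hlt'
    push Not at hlt'
    have e1 : (δ - 1) * (c' 0 + 1) ≤ (δ - 1) * n := Nat.mul_le_mul_left _ hlt'
    have e2 : c' (0 - 1) ≤ (δ - 1) * c' (0-1) := Nat.le_mul_of_pos_left _ (by omega)
    have e3 : q ≤ q * (δ - (k+3) + 1) := Nat.le_mul_of_pos_right _ (by omega)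
    rw [add_mul] at r0
    rw [mul_add] at e1
    omega
  have hQ : q ∈ QQ (k+3) δ := by
    refine ⟨by omega, fun i => c' i - (Pi.single 0 n : Fin (k+3) → ℕ) i, fun i => ?_⟩
    have hP : ∀ i, (Pi.single 0 n : Fin (k+3) → ℕ) i ≤ c' i := by
      intro i
      by_cases hi : i = 0
      · subst hi; simpa using hn
      · simp [hi]
    have := hrow i
    obtain ⟨x, hx⟩ := Nat.exists_eq_add_of_le (hP i)
    obtain ⟨y, hy⟩ := Nat.exists_eq_add_of_le (hP (i-1))
    beta_reduce
    rw [hx, hy] at this ⊢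
    simp only [Nat.add_sub_cancel_left]
    rw [add_mul, mul_add] at this
    omega
  have := ht q hQ
  omega

/-- exponents of the generators of `I^n` -/
def PP (n : ℕ) : Set (Fin (s + 1) →₀ ℕ) := {e | ∃ t c, t + ∑ i, c i = n ∧ e = ex s δ a t c}

lemma ex_add_single (t : ℕ) (c : Fin s → ℕ) (i : Fin s) :
    gE s δ i + ex s δ a t c = ex s δ a t (c + Pi.single i 1) := by
  simp only [ex, Pi.add_apply, add_smul, Finset.sum_add_distrib]
  rw [Finset.sum_eq_single i (f := fun j => (Pi.single i 1 : Fin s → ℕ) j • gE s δ j)]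
  · simp; abel
  · intro j _ hj; simp [hj]
  · simp

lemma ex_add_m (t : ℕ) (c : Fin s → ℕ) :
    mE s δ a + ex s δ a t c = ex s δ a (t+1) c := by
  simp only [ex, add_smul, one_smul]; abel

variable (K : Type*) [Field K]

noncomputable def mono (σ : Type*) (e : σ →₀ ℕ) : MvPolynomial σ K := monomial e 1

lemma mono_add {σ : Type*} (e f : σ →₀ ℕ) : mono K σ (e + f) = mono K σ e * mono K σ f := by
  simp [mono, monomial_mul]

lemma mono_nsmul {σ : Type*} (n : ℕ) (e : σ →₀ ℕ) : mono K σ (n • e) = mono K σ e ^ n := by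
  simp [mono, monomial_pow]

lemma mono_sum {σ ι : Type*} (t : Finset ι) (e : ι → σ →₀ ℕ) :
    mono K σ (∑ i ∈ t, e i) = ∏ i ∈ t, mono K σ (e i) := by
  classical
  induction t using Finset.induction_on with
  | empty => simp [mono]
  | insert i t hi ih => rw [Finset.sum_insert hi, Finset.prod_insert hi, mono_add, ih]

lemma mono_mem {σ : Type*} (S : Set (σ →₀ ℕ)) (e : σ →₀ ℕ) :
    mono K σ e ∈ Ideal.span (mono K σ '' S) ↔ ∃ f ∈ S, f ≤ e := by
  have := mem_ideal_span_monomial_image (R := K) (x := mono K σ e) (s := S)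
  change _ ∈ Ideal.span (mono K σ '' S) ↔ _ at this
  rw [this]
  classical
  simp [mono, support_monomial]

lemma span_mul {σ : Type*} (S T : Set (σ →₀ ℕ)) :
    Ideal.span (mono K σ '' S) * Ideal.span (mono K σ '' T) =
      Ideal.span (mono K σ '' {e | ∃ x ∈ S, ∃ y ∈ T, e = x + y}) := by
  rw [Ideal.span_mul_span']
  congr 1
  ext p
  simp only [Set.mem_mul, Set.mem_image, Set.mem_ofPred_eq]
  constructor
  · rintro ⟨_, ⟨x, hx, rfl⟩, _, ⟨y, hy, rfl⟩, rfl⟩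
    exact ⟨_, ⟨x, hx, y, hy, rfl⟩, mono_add K x y⟩
  · rintro ⟨_, ⟨x, hx, y, hy, rfl⟩, rfl⟩
    exact ⟨_, ⟨x, hx, rfl⟩, _, ⟨y, hy, rfl⟩, (mono_add K x y).symm⟩

noncomputable def JJ : Ideal (MvPolynomial (Fin (s+1)) K) :=
  Ideal.span (mono K _ '' Set.range (gE s δ))
noncomputable def II : Ideal (MvPolynomial (Fin (s+1)) K) :=
  Ideal.span (mono K _ '' (Set.range (gE s δ) ∪ {mE s δ a}))

lemma PP_zero : PP s δ a 0 = {0} := by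
  ext e
  simp only [PP, Set.mem_ofPred_eq, Set.mem_singleton_iff]
  constructor
  · rintro ⟨t, c, h, rfl⟩
    have ht : t = 0 := by omega
    have hc : ∑ i, c i = 0 := by omega
    rw [Finset.sum_eq_zero_iff] at hc
    simp only [Finset.mem_univ, true_imp_iff] at hc
    simp [ex, ht, hc]
  · rintro rfl
    exact ⟨0, 0, by simp, by simp [ex]⟩

lemma exists_pred (c : Fin s → ℕ) (h : ∑ i, c i ≠ 0) :
    ∃ (i : Fin s) (c' : Fin s → ℕ), c = c' + Pi.single i 1 := by
  obtain ⟨i, -, hi⟩ := Finset.exists_ne_zero_of_sum_ne_zero h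
  refine ⟨i, c - Pi.single i 1, ?_⟩
  ext j
  by_cases hj : j = i
  · subst hj; simp; omega
  · simp [hj]

lemma PP_succ (n : ℕ) : PP s δ a (n + 1) =
    {e | ∃ x ∈ (Set.range (gE s δ) ∪ {mE s δ a}), ∃ y ∈ PP s δ a n, e = x + y} := by
  ext e
  constructor
  · rintro ⟨t, c, h, rfl⟩
    by_cases hc : ∑ i, c i = 0
    · obtain ⟨t, rfl⟩ : ∃ t', t = t' + 1 := ⟨t - 1, by omega⟩
      exact ⟨_, Or.inr rfl, _, ⟨t, c, by omega, rfl⟩, (ex_add_m s δ a t c).symm⟩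
    · obtain ⟨i, c', rfl⟩ := exists_pred s c hc
      simp [Finset.sum_add_distrib] at h
      exact ⟨_, Or.inl ⟨i, rfl⟩, _, ⟨t, c', by omega, rfl⟩, (ex_add_single s δ a t c' i).symm⟩
  · rintro ⟨_, ⟨i, rfl⟩ | rfl, _, ⟨t, c, h, rfl⟩, rfl⟩
    · exact ⟨t, _, by simp [Finset.sum_add_distrib]; omega, ex_add_single s δ a t c i⟩
    · exact ⟨t+1, c, by omega, ex_add_m s δ a t c⟩

lemma II_pow (n : ℕ) : II s δ a K ^ n = Ideal.span (mono K _ '' PP s δ a n) := by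
  induction n with
  | zero => simp [PP_zero, mono]
  | succ n ih => rw [pow_succ', ih, II, span_mul, PP_succ]

lemma red_iff (hs : 3 ≤ s) (hδ : s + 1 ≤ δ) (ha : 1 ≤ a) (n : ℕ) :
    II s δ a K ^ (n + 1) = JJ s δ K * II s δ a K ^ n ↔ ∃ q ∈ QQ s δ, q ≤ n + 1 := by
  rw [II_pow, II_pow, JJ, span_mul]
  constructor
  · intro h
    have h1 : mono K _ (ex s δ a (n+1) 0) ∈ Ideal.span (mono K _ '' PP s δ a (n+1)) :=
      Ideal.subset_span ⟨_, ⟨n+1, 0, by simp, rfl⟩, rfl⟩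
    rw [h, mono_mem] at h1
    obtain ⟨_, ⟨_, ⟨i, rfl⟩, _, ⟨t, c, hn, rfl⟩, rfl⟩, hle⟩ := h1
    rw [ex_add_single] at hle
    obtain ⟨h1, h2⟩ := ex_le s δ a hs hδ ha (by simp [Finset.sum_add_distrib]; omega) hle
    refine ⟨n + 1 - t, ⟨by omega, c + Pi.single i 1, fun j => ?_⟩, by omega⟩
    have := h2 j
    simp only [Pi.zero_apply, mul_zero, add_zero] at this
    rw [Nat.sub_mul, ← this]
    omega
  · rintro ⟨q, ⟨hq1, c, hc⟩, hqn⟩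
    apply le_antisymm
    · rw [Ideal.span_le]
      rintro _ ⟨_, ⟨t, c', h, rfl⟩, rfl⟩
      rw [SetLike.mem_coe, mono_mem]
      by_cases hz : ∑ i, c' i = 0
      · have hcs := QQ_sum s δ hs hδ q c hc
        obtain ⟨i, c'', hcc⟩ := exists_pred s c (by omega)
        refine ⟨_, ⟨_, ⟨i, rfl⟩, _, ⟨n + 1 - q, c'', ?_, rfl⟩, rfl⟩, ?_⟩
        · rw [hcc] at hcs
          simp [Finset.sum_add_distrib] at hcs
          omega
        · rw [ex_add_single, ← hcc]
          intro j
          refine Fin.lastCases ?_ (fun j => ?_) j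
          · rw [ex_last, ex_last]
            exact Nat.mul_le_mul_left _ (by omega)
          · rw [ex_cast, ex_cast, ← hc, ← add_mul, show n + 1 - q + q = t by omega]
            omega
      · obtain ⟨i, c'', rfl⟩ := exists_pred s c' hz
        simp [Finset.sum_add_distrib] at h
        exact ⟨_, ⟨_, ⟨i, rfl⟩, _, ⟨t, c'', by omega, rfl⟩, rfl⟩, (ex_add_single s δ a t c'' i).le⟩
    · rw [PP_succ]
      apply Ideal.span_mono
      apply Set.image_mono
      rintro _ ⟨x, hx, y, hy, rfl⟩
      exact ⟨x, Or.inl hx, y, hy, rfl⟩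

/-- every generator is divisible by one with small `t` -/
lemma reduce_t (hs : 3 ≤ s) (hδ : s + 1 ≤ δ) {q : ℕ} (hq : q ∈ QQ s δ)
    (t : ℕ) : ∀ c : Fin s → ℕ, ∃ t' c', t' < q ∧ t' + ∑ i, c' i = t + ∑ i, c i ∧
      ex s δ a t' c' ≤ ex s δ a t c := by
  obtain ⟨hq1, cq, hcq⟩ := hq
  have hcs := QQ_sum s δ hs hδ q cq hcq
  induction t using Nat.strong_induction_on with
  | _ t ih =>
    intro c
    by_cases h : t < q
    · exact ⟨t, c, h, rfl, le_rfl⟩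
    · push Not at h
      obtain ⟨t', c', h1, h2, h3⟩ := ih (t - q) (by omega) (c + cq)
      refine ⟨t', c', h1, ?_, h3.trans ?_⟩
      · simp only [Pi.add_apply, Finset.sum_add_distrib] at h2
        omega
      · intro j
        refine Fin.lastCases ?_ (fun j => ?_) j
        · rw [ex_last, ex_last]
          exact Nat.mul_le_mul_left _ (by omega)
        · rw [ex_cast, ex_cast]
          have e := hcq j
          have e2 : t * vv s δ j = (t - q) * vv s δ j + q * vv s δ j := by
            rw [← add_mul]; congr 1; omega
          rw [e2, e]
          simp only [Pi.add_apply, mul_add]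
          omega

lemma maxGenDeg_pow (hs : 3 ≤ s) (hδ : s + 1 ≤ δ) (ha : 1 ≤ a) {r : ℕ} (hr : r + 1 ∈ QQ s δ)
    (hmin : ∀ q ∈ QQ s δ, r < q) (n : ℕ) :
    maxGenDeg (II s δ a K ^ n) = δ * n + a * min n r := by
  unfold maxGenDeg
  apply le_antisymm
  · apply Nat.sInf_le
    apply le_antisymm
    · conv_lhs => rw [II_pow]
      rw [Ideal.span_le]
      rintro _ ⟨_, ⟨t, c, h, rfl⟩, rfl⟩
      obtain ⟨t', c', h1, h2, h3⟩ := reduce_t s δ a hs hδ hr t c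
      obtain ⟨w, hw⟩ := exists_add_of_le h3
      rw [hw, mono_add]
      apply Ideal.mul_mem_right
      apply Ideal.subset_span
      constructor
      · rw [II_pow]
        exact Ideal.subset_span ⟨_, ⟨t', c', by omega, rfl⟩, rfl⟩
      · rw [mono, totalDegree_monomial _ one_ne_zero]
        change (ex s δ a t' c').degree ≤ _
        rw [degree_ex s δ a hs hδ, h2, h]
        have : a * t' ≤ a * min n r := Nat.mul_le_mul_left _ (by omega)
        omega
    · rw [Ideal.span_le]
      exact fun f hf => hf.1
  · apply le_csInf
    · refine ⟨δ * n + a * n, ?_⟩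
      · apply le_antisymm
        · conv_lhs => rw [II_pow]
          rw [Ideal.span_le]
          rintro _ ⟨_, ⟨t, c, h, rfl⟩, rfl⟩
          apply Ideal.subset_span
          constructor
          · rw [II_pow]
            exact Ideal.subset_span ⟨_, ⟨t, c, by omega, rfl⟩, rfl⟩
          · rw [mono, totalDegree_monomial _ one_ne_zero]
            change (ex s δ a t c).degree ≤ _
            rw [degree_ex s δ a hs hδ, h]
            have : a * t ≤ a * n := Nat.mul_le_mul_left _ (by omega)
            omega
        · rw [Ideal.span_le]
          exact fun f hf => hf.1
    · intro D hD
      by_contra hlt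
      push Not at hlt
      have key : II s δ a K ^ n ≤ Ideal.span (mono K _ '' {e ∈ PP s δ a n | e.degree ≤ D}) := by
        rw [hD, Ideal.span_le]
        rintro f ⟨hf, hdeg⟩
        rw [II_pow] at hf
        have hf' := (mem_ideal_span_monomial_image (R := K)).1 hf
        refine (mem_ideal_span_monomial_image (R := K)).2 fun x hx => ?_
        obtain ⟨e, he, hle⟩ := hf' x hx
        refine ⟨e, ⟨he, ?_⟩, hle⟩
        have h1 : x.degree ≤ f.totalDegree := le_totalDegree hx
        have h2 : e.degree ≤ x.degree := Finsupp.degree_mono hle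
        omega
      have hmem : mono K _ (ex s δ a (min n r) (Pi.single 0 (n - min n r))) ∈ II s δ a K ^ n := by
        rw [II_pow]
        exact Ideal.subset_span ⟨_, ⟨_, _, by simp, rfl⟩, rfl⟩
      have := key hmem
      rw [mono_mem] at this
      obtain ⟨_, ⟨⟨t', c', h1, rfl⟩, h2⟩, h3⟩ := this
      have ht := core s δ a hs hδ ha (by omega) h3 (fun q hq => by have := hmin q hq; omega)
      rw [degree_ex s δ a hs hδ, h1, ht] at h2
      omega

lemma not_mem (hs : 3 ≤ s) (hδ : s + 1 ≤ δ) (ha : 1 ≤ a) {r : ℕ}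
    (hmin : ∀ q ∈ QQ s δ, r < q) (t n : ℕ) (ht : t ≤ r) :
    mono K _ (mE s δ a) ^ t * mono K _ (gE s δ 0) ^ n ∉
      Ideal.span (Set.range X) * II s δ a K ^ (t + n) := by
  have hX : (Set.range X : Set (MvPolynomial (Fin (s+1)) K)) =
      mono K _ '' Set.range (fun i => single i 1) := by
    rw [← Set.range_comp]; rfl
  rw [hX, II_pow, span_mul, ← mono_nsmul, ← mono_nsmul, ← mono_add]
  have he : t • mE s δ a + n • gE s δ 0 = ex s δ a t (Pi.single 0 n) := by
    unfold ex
    rw [Finset.sum_eq_single 0]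
    · simp
    · intro j _ hj; simp [hj]
    · simp
  rw [he, mono_mem]
  rintro ⟨_, ⟨_, ⟨i, rfl⟩, _, ⟨t', c', h1, rfl⟩, rfl⟩, hle⟩
  have ht' := core s δ a hs hδ ha h1 (le_trans (le_add_self) hle)
    (fun q hq => by have := hmin q hq; omega)
  have := Finsupp.degree_mono hle
  rw [map_add, degree_ex s δ a hs hδ, degree_ex s δ a hs hδ, h1, ht', Finsupp.degree_single] at this
  simp at this
end
end DegEx

theorem degree_excess_and_gstab_of_example
    {K : Type*} [Field K] (s : ℕ) [NeZero s] (hs : 3 ≤ s) (δ : ℕ) (hδ : s + 1 ≤ δ)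
    (a : ℕ) (ha : 1 ≤ a)
    (Mgen : Fin s → MvPolynomial (Fin (s + 1)) K)
    (hMgen : Mgen = fun i =>
      X (Fin.castSucc i) ^ (δ - 1) * X (Fin.castSucc (i + 1)))
    (M : MvPolynomial (Fin (s + 1)) K)
    (hM : M = X (0 : Fin (s + 1)) ^ (δ - s) * (∏ i : Fin s, X (Fin.castSucc i)) *
      X (Fin.last s) ^ a)
    (J I : Ideal (MvPolynomial (Fin (s + 1)) K))
    (hJ : J = Ideal.span (Set.range Mgen))
    (hI : I = J ⊔ Ideal.span {M})
    (mI : Ideal (MvPolynomial (Fin (s + 1)) K)) (hmI : mI = Ideal.span (Set.range X))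
    (r : ℕ) (hr : r = sInf {n | I ^ (n + 1) = J * I ^ n})
    (gstab : ℕ)
    (hgstab : gstab = sInf {n₀ | ∀ n ≥ n₀,
      maxGenDeg (I ^ n) + δ * n₀ = maxGenDeg (I ^ n₀) + δ * n}) :
    (∀ t n : ℕ, 1 ≤ t → t ≤ r → M ^ t * Mgen 0 ^ n ∉ mI * I ^ (t + n)) ∧
    (∀ n : ℕ, 1 ≤ n → n ≤ r - 1 → maxGenDeg (I ^ n) = δ * n + a * n) ∧
    (∀ n : ℕ, r ≤ n → maxGenDeg (I ^ n) = δ * n + r * a) ∧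
    gstab = r ∧ (δ - 1) ^ (s - 2) < r := by
  have hXp : ∀ (i : Fin (s+1)) (k : ℕ),
      (X i ^ k : MvPolynomial (Fin (s+1)) K) = DegEx.mono K _ (Finsupp.single i k) := by
    intro i k; rw [X_pow_eq_monomial]; rfl
  have hg : Mgen = fun i => DegEx.mono K _ (DegEx.gE s δ i) := by
    rw [hMgen]; funext i
    rw [DegEx.gE, DegEx.mono_add, ← hXp, ← hXp, pow_one]
  have hm : M = DegEx.mono K _ (DegEx.mE s δ a) := by
    rw [hM, DegEx.mE, DegEx.mono_add, DegEx.mono_add, DegEx.mono_sum, ← hXp, ← hXp]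
    simp only [← hXp, pow_one]
  have hJ' : J = DegEx.JJ s δ K := by
    rw [hJ, hg, DegEx.JJ, ← Set.range_comp]; rfl
  have hI' : I = DegEx.II s δ a K := by
    rw [hI, hJ', DegEx.JJ, hm, DegEx.II, Set.image_union, Ideal.span_union, Set.image_singleton]
  clear hI hJ hM hMgen
  subst hI' hJ' hm hg hmI
  have hne := DegEx.QQ_nonempty s δ hs hδ
  obtain ⟨q, hq⟩ : ∃ q, q = sInf (DegEx.QQ s δ) := ⟨_, rfl⟩
  have hqQ : q ∈ DegEx.QQ s δ := hq ▸ Nat.sInf_mem hne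
  have hqmin : ∀ x ∈ DegEx.QQ s δ, q ≤ x := fun x hx => hq ▸ Nat.sInf_le hx
  have hlow := DegEx.QQ_low s δ hs hδ q hqQ
  have hrq : r + 1 = q := by
    have : r = q - 1 := by
      rw [hr]
      apply le_antisymm
      · apply Nat.sInf_le
        exact (DegEx.red_iff s δ a K hs hδ ha _).2 ⟨q, hqQ, by omega⟩
      · apply le_csInf
        · exact ⟨q, (DegEx.red_iff s δ a K hs hδ ha _).2 ⟨q, hqQ, by omega⟩⟩
        · intro n hn
          obtain ⟨x, hx, hxn⟩ := (DegEx.red_iff s δ a K hs hδ ha _).1 hn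
          have := hqmin x hx
          omega
    omega
  have hmin : ∀ x ∈ DegEx.QQ s δ, r < x := fun x hx => by have := hqmin x hx; omega
  have hrQ : r + 1 ∈ DegEx.QQ s δ := hrq ▸ hqQ
  have hdeg := DegEx.maxGenDeg_pow s δ a K hs hδ ha hrQ hmin
  refine ⟨fun t n _ ht => DegEx.not_mem s δ a K hs hδ ha hmin t n ht, ?_, ?_, ?_, by omega⟩
  · intro n _ hn
    rw [hdeg, min_eq_left (by omega)]
  · intro n hn
    rw [hdeg, min_eq_right hn, mul_comm a]
  · rw [hgstab]
    simp only [hdeg]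
    apply le_antisymm
    · apply Nat.sInf_le
      intro n hn
      rw [min_eq_right hn, min_self]; omega
    · apply le_csInf
      · refine ⟨r, fun n hn => ?_⟩
        rw [min_eq_right hn, min_self]; omega
      · intro n₀ h
        by_contra hlt
        push Not at hlt
        have := h r hlt.le
        rw [min_self, min_eq_left hlt.le] at this
        have h2 : a * r = a * n₀ := by omega
        have := Nat.eq_of_mul_eq_mul_left ha h2
        omega
end

section
/- For any integer k ≥ 1 and any positive integers 2 ≤ n_1 < n_2 < ... < n_k with n_{i+1} − n_i ≥ 2, there exists a monomial ideal I in a polynomial ring over a field whose degree excess function ε(I;n) = d(I^n) − p(I)n has local maxima exactly at the points n_1,...,n_k (where n is a local maximum if ε(I;n) > ε(I;n−1) and ε(I;n) > ε(I;n+1)). -/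
open MvPolynomial

/-- Computation of `maxGenDeg` of an ideal spanned by monomials. -/
lemma maxGenDeg_span {K : Type*} [Field K] {σ : Type*} (T : Set (σ →₀ ℕ)) (D : ℕ)
    (h1 : ∀ α ∈ T, ∃ β ∈ T, β ≤ α ∧ β.degree ≤ D)
    (h2 : ∃ α ∈ T, α.degree = D ∧ ∀ β ∈ T, β ≤ α → D ≤ β.degree) :
    maxGenDeg (Ideal.span ((fun α => monomial α (1 : K)) '' T)) = D := by
  classical
  set I := Ideal.span ((fun α => monomial α (1 : K)) '' T) with hI
  unfold maxGenDeg
  apply le_antisymm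
  · apply Nat.sInf_le
    show I = _
    apply le_antisymm
    · rw [hI, Ideal.span_le]
      rintro _ ⟨α, hα, rfl⟩
      obtain ⟨β, hβ, hle, hd⟩ := h1 α hα
      have : (monomial α (1 : K)) = monomial (α - β) 1 * monomial β 1 := by
        rw [monomial_mul, tsub_add_cancel_of_le hle, one_mul]
      show monomial α (1 : K) ∈ _
      rw [this]
      apply Ideal.mul_mem_left
      apply Ideal.subset_span
      refine ⟨Ideal.subset_span ⟨β, hβ, rfl⟩, ?_⟩
      rw [totalDegree_monomial _ one_ne_zero]
      exact hd
    · rw [Ideal.span_le]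
      exact fun f hf => hf.1
  · obtain ⟨α, hα, hD, hmin⟩ := h2
    apply le_csInf
    · refine ⟨D, ?_⟩
      show I = _
      apply le_antisymm
      · rw [hI, Ideal.span_le]
        rintro _ ⟨α, hα, rfl⟩
        obtain ⟨β, hβ, hle, hd⟩ := h1 α hα
        have : (monomial α (1 : K)) = monomial (α - β) 1 * monomial β 1 := by
          rw [monomial_mul, tsub_add_cancel_of_le hle, one_mul]
        show monomial α (1 : K) ∈ _
        rw [this]
        apply Ideal.mul_mem_left
        apply Ideal.subset_span
        refine ⟨Ideal.subset_span ⟨β, hβ, rfl⟩, ?_⟩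
        rw [totalDegree_monomial _ one_ne_zero]
        exact hd
      · rw [Ideal.span_le]
        exact fun f hf => hf.1
    · intro d hd
      have hd : I = Ideal.span {f | f ∈ I ∧ f.totalDegree ≤ d} := hd
      have hle : I ≤ Ideal.span ((fun α => monomial α (1 : K)) '' {β | (∃ γ ∈ T, γ ≤ β) ∧ β.degree ≤ d}) := by
        rw [hd, Ideal.span_le]
        rintro f ⟨hf, hfd⟩
        rw [SetLike.mem_coe, mem_ideal_span_monomial_image]
        rw [hI, mem_ideal_span_monomial_image] at hf
        intro x hx
        exact ⟨x, ⟨hf x hx, (le_totalDegree hx).trans hfd⟩, le_rfl⟩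
      have hm : monomial α (1 : K) ∈ I := Ideal.subset_span ⟨α, hα, rfl⟩
      have := hle hm
      rw [mem_ideal_span_monomial_image] at this
      obtain ⟨β, ⟨⟨γ, hγ, hγβ⟩, hβd⟩, hβα⟩ := this α (by
        rw [mem_support_iff, coeff_monomial]; simp)
      exact (hmin γ hγ (hγβ.trans hβα)).trans ((Finsupp.degree_mono hγβ).trans hβd)

/-- A block: exponents `(x, y, w)` of the `n`-th power of an ideal in three variables,
with degree excess function `f`. -/
structure Blk (P : ℕ → ℕ → ℕ → ℕ → Prop) (q : ℕ) (f : ℕ → ℕ) : Prop where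
  add : ∀ n x y w x' y' w', 1 ≤ n → P n x y w → P 1 x' y' w' → P (n+1) (x+x') (y+y') (w+w')
  split : ∀ n x y w, 1 ≤ n → P (n+1) x y w → ∃ x₁ y₁ w₁ x₂ y₂ w₂, P n x₁ y₁ w₁ ∧ P 1 x₂ y₂ w₂ ∧
    x = x₁ + x₂ ∧ y = y₁ + y₂ ∧ w = w₁ + w₂
  hom : ∀ n x y w, P n x y w → x + y = q * n
  upper : ∀ n x y w, 1 ≤ n → P n x y w → ∃ w', P n x y w' ∧ w' ≤ w ∧ w' ≤ f n
  lower : ∀ n, 1 ≤ n → ∃ x y, P n x y (f n) ∧ ∀ w', P n x y w' → f n ≤ w'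

/-- The ramp block. -/
def rampP (m n x y w : ℕ) : Prop :=
  ∃ a b, a + b + w = n ∧ x = a * (m+1) + w ∧ y = b * (m+1) + m * w

lemma ramp_blk (m : ℕ) : Blk (rampP m) (m+1) (fun n => min n m) where
  add := by
    rintro n x y w x' y' w' hn ⟨a, b, h, rfl, rfl⟩ ⟨a', b', h', rfl, rfl⟩
    exact ⟨a + a', b + b', by omega, by ring, by ring⟩
  split := by
    rintro n x y w hn ⟨a, b, h, rfl, rfl⟩
    rcases Nat.eq_zero_or_pos w with hw | hw
    · rcases Nat.eq_zero_or_pos a with ha | ha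
      · obtain ⟨b, rfl⟩ : ∃ c, b = c + 1 := ⟨b - 1, by omega⟩
        exact ⟨_, _, w, _, _, 0, ⟨a, b, by omega, rfl, rfl⟩, ⟨0, 1, by omega, rfl, rfl⟩,
          by ring, by ring, by ring⟩
      · obtain ⟨a, rfl⟩ : ∃ c, a = c + 1 := ⟨a - 1, by omega⟩
        exact ⟨_, _, w, _, _, 0, ⟨a, b, by omega, rfl, rfl⟩, ⟨1, 0, by omega, rfl, rfl⟩,
          by ring, by ring, by ring⟩
    · obtain ⟨w, rfl⟩ : ∃ c, w = c + 1 := ⟨w - 1, by omega⟩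
      exact ⟨_, _, w, _, _, 1, ⟨a, b, by omega, rfl, rfl⟩, ⟨0, 0, by omega, rfl, rfl⟩,
          by ring, by ring, by ring⟩
  hom := by
    rintro n x y w ⟨a, b, rfl, rfl, rfl⟩
    ring
  upper := by
    rintro n x y w hn ⟨a, b, h, rfl, rfl⟩
    have e := Nat.div_add_mod w (m+1)
    have hlt := Nat.mod_lt w (Nat.succ_pos m)
    have hle := Nat.mod_le w (m+1)
    simp only [Nat.succ_eq_add_one] at hlt
    generalize w / (m+1) = d at *
    generalize w % (m+1) = c at *
    refine ⟨c, ⟨a + d, b + m * d, ?_, ?_, ?_⟩, hle, ?_⟩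
    · rw [← h, ← e]; ring
    · rw [← e]; ring
    · rw [← e]; ring
    · simp only [le_min_iff]; omega
  lower := by
    intro n hn
    refine ⟨min n m, _, ⟨0, n - min n m, by omega, by omega, rfl⟩, ?_⟩
    rintro w' ⟨a, b, h, hx, hy⟩
    rcases Nat.eq_zero_or_pos a with ha | ha
    · subst ha; omega
    · have : m + 1 ≤ a * (m+1) := Nat.le_mul_of_pos_left _ ha
      omega

def stepJ (m n x : ℕ) : Prop := ∃ i t, i ≤ n ∧ t ≤ n ∧ x = (m+2) * i + t

/-- The step block. -/
def stepP (m n x y w : ℕ) : Prop :=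
  x + y = (m+3) * n ∧ (2 ≤ w ∨ stepJ m n x)

lemma step_blk (m : ℕ) : Blk (stepP m) (m+3) (fun n => if n ≤ m then 2 else 0) where
  add := by
    rintro n x y w x' y' w' hn ⟨h, h1⟩ ⟨h', h1'⟩
    refine ⟨by rw [mul_add, ← h, ← h']; ring, ?_⟩
    rcases h1 with h1 | ⟨i, t, hi, ht, rfl⟩
    · left; omega
    rcases h1' with h1' | ⟨i', t', hi', ht', rfl⟩
    · left; omega
    right
    exact ⟨i + i', t + t', by omega, by omega, by ring⟩
  split := by
    rintro n x y w hn ⟨h, h1⟩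
    have hq : (m+3) ≤ (m+3) * n := Nat.le_mul_of_pos_right _ hn
    rw [mul_add, mul_one] at h
    rcases h1 with h1 | ⟨i, t, hi, ht, hx⟩
    · by_cases hc : x ≤ (m+3) * n
      · exact ⟨x, (m+3)*n - x, w, 0, m+3, 0, ⟨by omega, Or.inl h1⟩,
          ⟨by omega, Or.inr ⟨0, 0, by omega, by omega, by omega⟩⟩, by omega, by omega, by omega⟩
      · exact ⟨x - (m+3), y, w, m+3, 0, 0, ⟨by omega, Or.inl h1⟩,
          ⟨by omega, Or.inr ⟨1, 1, by omega, by omega, by omega⟩⟩, by omega, by omega, by omega⟩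
    · obtain ⟨i₁, i₂, hi₁, hi₂, rfl⟩ : ∃ i₁ i₂, i₁ ≤ n ∧ i₂ ≤ 1 ∧ i = i₁ + i₂ :=
        ⟨min i n, i - min i n, by omega, by omega, by omega⟩
      obtain ⟨t₁, t₂, ht₁, ht₂, rfl⟩ : ∃ i₁ i₂, i₁ ≤ n ∧ i₂ ≤ 1 ∧ t = i₁ + i₂ :=
        ⟨min t n, t - min t n, by omega, by omega, by omega⟩
      have e1 : (m+2) * i₁ + t₁ ≤ (m+3) * n := by nlinarith
      have e2 : (m+2) * i₂ + t₂ ≤ (m+3) := by nlinarith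
      rw [mul_add] at hx
      exact ⟨(m+2) * i₁ + t₁, (m+3)*n - ((m+2) * i₁ + t₁), w, (m+2) * i₂ + t₂,
        (m+3) - ((m+2) * i₂ + t₂), 0, ⟨by omega, Or.inr ⟨i₁, t₁, hi₁, ht₁, rfl⟩⟩,
        ⟨by omega, Or.inr ⟨i₂, t₂, hi₂, ht₂, rfl⟩⟩, by omega, by omega, by omega⟩
  hom := fun n x y w h => h.1
  upper := by
    rintro n x y w hn ⟨h, h1⟩
    by_cases hc : n ≤ m
    · simp only [hc, if_true]
      by_cases hw : w ≤ 2
      · exact ⟨w, ⟨h, h1⟩, le_rfl, hw⟩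
      · exact ⟨2, ⟨h, Or.inl le_rfl⟩, by omega, le_rfl⟩
    · simp only [hc, if_false]
      refine ⟨0, ⟨h, Or.inr ?_⟩, by omega, le_rfl⟩
      have e := Nat.div_add_mod x (m+2)
      have hlt : x % (m+2) < m+2 := Nat.mod_lt x (by omega)
      by_cases hd : x / (m+2) ≤ n
      · exact ⟨_, _, hd, by omega, e.symm⟩
      · have : (m+2) * n ≤ (m+2) * (x / (m+2)) := Nat.mul_le_mul_left _ (by omega)
        have e3 : (m+3) * n = (m+2) * n + n := by ring
        exact ⟨n, x - (m+2) * n, le_rfl, by omega, by omega⟩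
  lower := by
    intro n hn
    by_cases hc : n ≤ m
    · simp only [hc, if_true]
      have : (m+3) * 1 ≤ (m+3) * n := Nat.mul_le_mul_left _ hn
      have e3 : (m+3) * n = (m+2) * n + n := by ring
      have : (m+2) * 1 ≤ (m+2) * n := Nat.mul_le_mul_left _ hn
      refine ⟨n+1, (m+3)*n - (n+1), ⟨by omega, Or.inl le_rfl⟩, ?_⟩
      rintro w' ⟨_, h | ⟨i, t, hi, ht, hx⟩⟩
      · exact h
      · rcases Nat.eq_zero_or_pos i with hi0 | hi0
        · subst hi0; omega
        · have : (m+2) * 1 ≤ (m+2) * i := Nat.mul_le_mul_left _ hi0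
          omega
    · simp only [hc, if_false]
      exact ⟨0, (m+3)*n, ⟨by omega, Or.inr ⟨0, 0, by omega, by omega, by omega⟩⟩, fun _ _ => Nat.zero_le _⟩

section family
variable {ι : Type} [Fintype ι] {s : ℕ} (e : ι × Fin 3 ≃ Fin s)

def TT (P : ι → ℕ → ℕ → ℕ → ℕ → Prop) (n : ℕ) : Set (Fin s →₀ ℕ) :=
  {α | ∀ i, P i n (α (e (i, 0))) (α (e (i, 1))) (α (e (i, 2)))}

noncomputable def mkE (x y w : ι → ℕ) : Fin s →₀ ℕ :=
  Finsupp.equivFunOnFinite.symm (fun j => ![x (e.symm j).1, y (e.symm j).1, w (e.symm j).1] (e.symm j).2)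

@[simp] lemma mkE0 (x y w : ι → ℕ) (i : ι) : mkE e x y w (e (i, 0)) = x i := by simp [mkE]
@[simp] lemma mkE1 (x y w : ι → ℕ) (i : ι) : mkE e x y w (e (i, 1)) = y i := by simp [mkE]
@[simp] lemma mkE2 (x y w : ι → ℕ) (i : ι) : mkE e x y w (e (i, 2)) = w i := by simp [mkE]

lemma extE {Q : ℕ → ℕ → Prop} {α β : Fin s →₀ ℕ}
    (h0 : ∀ i, Q (α (e (i, 0))) (β (e (i, 0))))
    (h1 : ∀ i, Q (α (e (i, 1))) (β (e (i, 1))))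
    (h2 : ∀ i, Q (α (e (i, 2))) (β (e (i, 2)))) (j : Fin s) : Q (α j) (β j) := by
  obtain ⟨⟨i, c⟩, rfl⟩ := e.surjective j
  fin_cases c
  · exact h0 i
  · exact h1 i
  · exact h2 i

lemma degE (α : Fin s →₀ ℕ) :
    α.degree = ∑ i, (α (e (i, 0)) + α (e (i, 1)) + α (e (i, 2))) := by
  rw [Finsupp.degree_eq_sum, ← e.sum_comp, Fintype.sum_prod_type]
  simp [Fin.sum_univ_three]

variable {P : ι → ℕ → ℕ → ℕ → ℕ → Prop} {q : ι → ℕ} {f : ι → ℕ → ℕ}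

lemma span_TT_pow (K : Type) [Field K] (hP : ∀ i, Blk (P i) (q i) (f i)) (n : ℕ) (hn : 1 ≤ n) :
    (Ideal.span ((fun α => monomial α (1 : K)) '' TT e P 1)) ^ n =
      Ideal.span ((fun α => monomial α (1 : K)) '' TT e P n) := by
  induction n, hn using Nat.le_induction with
  | base => simp
  | succ n hn ih =>
    rw [pow_succ, ih, Ideal.span_mul_span']
    congr 1
    ext g
    constructor
    · rintro ⟨_, ⟨α, hα, rfl⟩, _, ⟨β, hβ, rfl⟩, rfl⟩
      refine ⟨α + β, fun i => (hP i).add _ _ _ _ _ _ _ hn (hα i) (hβ i), ?_⟩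
      simp [monomial_mul]
    · rintro ⟨α, hα, rfl⟩
      choose x₁ y₁ w₁ x₂ y₂ w₂ h1 h2 hx hy hw using fun i => (hP i).split _ _ _ _ hn (hα i)
      refine ⟨_, ⟨mkE e x₁ y₁ w₁, fun i => by simpa using h1 i, rfl⟩, _,
        ⟨mkE e x₂ y₂ w₂, fun i => by simpa using h2 i, rfl⟩, ?_⟩
      simp only [monomial_mul, one_mul]
      congr 2
      refine Finsupp.ext fun j => ?_
      refine extE e (Q := fun a b => a = b) ?_ ?_ ?_ j <;> intro i <;> simp [hx, hy, hw]

lemma maxGenDeg_TT (K : Type) [Field K] (hP : ∀ i, Blk (P i) (q i) (f i)) (n : ℕ) (hn : 1 ≤ n) :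
    maxGenDeg ((Ideal.span ((fun α => monomial α (1 : K)) '' TT e P 1)) ^ n) =
      (∑ i, q i) * n + ∑ i, f i n := by
  rw [span_TT_pow e K hP n hn]
  apply maxGenDeg_span
  · intro α hα
    choose w hw hle hf using fun i => (hP i).upper _ _ _ _ hn (hα i)
    refine ⟨mkE e (fun i => α (e (i, 0))) (fun i => α (e (i, 1))) w,
      fun i => by simpa using hw i, ?_, ?_⟩
    · intro j
      refine extE e (Q := fun a b => a ≤ b) ?_ ?_ ?_ j <;> intro i <;> simp [hle]
    · rw [degE e, Finset.sum_mul, ← Finset.sum_add_distrib]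
      apply Finset.sum_le_sum
      intro i _
      have := (hP i).hom _ _ _ _ (hα i)
      have := hf i
      simp only [mkE0, mkE1, mkE2]
      omega
  · choose x y hxy hmin using fun i => (hP i).lower n hn
    refine ⟨mkE e x y (fun i => f i n), fun i => by simpa using hxy i, ?_, ?_⟩
    · rw [degE e, Finset.sum_mul, ← Finset.sum_add_distrib]
      apply Finset.sum_congr rfl
      intro i _
      have := (hP i).hom _ _ _ _ (hxy i)
      simp only [mkE0, mkE1, mkE2]
      omega
    · intro β hβ hle
      rw [degE e, Finset.sum_mul, ← Finset.sum_add_distrib]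
      apply Finset.sum_le_sum
      intro i _
      have h1 := (hP i).hom _ _ _ _ (hxy i)
      have h2 := (hP i).hom _ _ _ _ (hβ i)
      have h3 := hle (e (i, 0))
      have h4 := hle (e (i, 1))
      simp only [mkE0, mkE1] at h3 h4
      have h5 : β (e (i, 0)) = x i := by omega
      have h6 : β (e (i, 1)) = y i := by omega
      have h7 := hβ i
      rw [h5, h6] at h7
      have := hmin i _ h7
      omega

end family

lemma maxGenDeg_top {K : Type*} [Field K] {σ : Type*} :
    maxGenDeg (⊤ : Ideal (MvPolynomial σ K)) = 0 := by
  apply Nat.eq_zero_of_le_zero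
  apply Nat.sInf_le
  show _ = _
  symm
  rw [Ideal.eq_top_iff_one]
  exact Ideal.subset_span ⟨trivial, by simp⟩

lemma maxGenDeg_bot {K : Type*} [Field K] {σ : Type*} :
    maxGenDeg (⊥ : Ideal (MvPolynomial σ K)) = 0 := by
  apply Nat.eq_zero_of_le_zero
  apply Nat.sInf_le
  show _ = _
  symm
  rw [Ideal.span_eq_bot]
  exact fun f hf => hf.1

/-- given `2 ≤ n_1 < n_2 < ... < n_k` with consecutive gaps at least `2`,
there is a monomial ideal whose degree excess function `ε(I;n) = d(I^n) − p(I)·n` has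
local maxima exactly at the points `n_1, ..., n_k`. -/
theorem degree_excess_with_prescribed_local_maxima
    (k : ℕ) (hk : 1 ≤ k) (nseq : Fin k → ℕ)
    (h2 : ∀ i, 2 ≤ nseq i) (hmono : StrictMono nseq)
    (hgap : ∀ i : Fin k, ∀ h : (i : ℕ) + 1 < k, nseq i + 2 ≤ nseq ⟨(i : ℕ) + 1, h⟩) :
    ∃ (K : Type) (_ : Field K) (s : ℕ) (I : Ideal (MvPolynomial (Fin s) K)),
      IsMonomialIdeal I ∧ I ≠ ⊥ ∧ I ≠ ⊤ ∧
      ∃ p : ℕ, (∃ c N : ℕ, ∀ n ≥ N, maxGenDeg (I ^ n) = p * n + c) ∧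
        ∀ n : ℕ, 2 ≤ n →
          ((((maxGenDeg (I ^ n) : ℤ) - p * n > (maxGenDeg (I ^ (n - 1)) : ℤ) - p * (n - 1)) ∧
            ((maxGenDeg (I ^ n) : ℤ) - p * n > (maxGenDeg (I ^ (n + 1)) : ℤ) - p * (n + 1)))
            ↔ n ∈ Set.range nseq) := by
  classical
  set M := nseq ⟨k - 1, by omega⟩ with hM
  have hMle : ∀ i, nseq i ≤ M := fun i => hmono.monotone (by
    rw [Fin.le_def]; have := i.2; simp only; omega)
  have hsep : ∀ i j, nseq j + 1 ≠ nseq i := by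
    intro i j hij
    have hlt : j < i := by rw [← hmono.lt_iff_lt]; omega
    have hlt' : (j : ℕ) < i := hlt
    have hj : (j : ℕ) + 1 < k := by have := i.2; omega
    have h1 := hgap j hj
    have h2 : nseq ⟨(j : ℕ) + 1, hj⟩ ≤ nseq i := hmono.monotone (by
      rw [Fin.le_def]; simp only; omega)
    omega
  let P : Option (Fin k) → ℕ → ℕ → ℕ → ℕ → Prop := fun o =>
    o.elim (rampP M) (fun i => stepP (nseq i))
  let q : Option (Fin k) → ℕ := fun o => o.elim (M + 1) (fun i => nseq i + 3)
  let f : Option (Fin k) → ℕ → ℕ := fun o =>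
    o.elim (fun n => min n M) (fun i n => if n ≤ nseq i then 2 else 0)
  have hP : ∀ o, Blk (P o) (q o) (f o) := by
    rintro (_ | i)
    · exact ramp_blk M
    · exact step_blk (nseq i)
  let e := Fintype.equivFin (Option (Fin k) × Fin 3)
  set I := Ideal.span ((fun α => monomial α (1 : ℚ)) '' TT e P 1) with hI
  set g : ℕ → ℕ := fun n => ∑ i : Fin k, (if n ≤ nseq i then 2 else 0) with hg
  have hd : ∀ n, 1 ≤ n → maxGenDeg (I ^ n) = (∑ o, q o) * n + (min n M + g n) := by
    intro n hn
    rw [hI, maxGenDeg_TT e ℚ hP n hn, Fintype.sum_option (f := fun o => f o n)]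
    rfl
  have hq : 1 ≤ ∑ o, q o := by
    rw [Fintype.sum_option]
    show 1 ≤ (M + 1) + _
    omega
  have hd1 := hd 1 le_rfl
  rw [pow_one] at hd1
  refine ⟨ℚ, inferInstance, _, I, ⟨_, hI⟩, ?_, ?_, ∑ o, q o, ⟨M, M + 1, ?_⟩, ?_⟩
  · intro h
    rw [h, maxGenDeg_bot] at hd1
    omega
  · intro h
    rw [h, maxGenDeg_top] at hd1
    omega
  · intro n hn
    rw [hd n (by omega)]
    have : g n = 0 := by
      apply Finset.sum_eq_zero
      intro i _
      have := hMle i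
      rw [if_neg (by omega)]
    omega
  · intro n hn
    rw [hd n (by omega), hd (n-1) (by omega), hd (n+1) (by omega)]
    generalize (∑ o, q o) = p
    have c1 : ((n - 1 : ℕ) : ℤ) = (n : ℤ) - 1 := by omega
    have key : (((min n M + g n : ℕ) : ℤ) > ((min (n-1) M + g (n-1) : ℕ) : ℤ) ∧
        ((min n M + g n : ℕ) : ℤ) > ((min (n+1) M + g (n+1) : ℕ) : ℤ)) ↔ n ∈ Set.range nseq := by
      constructor
      · rintro ⟨-, h⟩
        by_contra hc
        have : g n ≤ g (n+1) := by
          apply Finset.sum_le_sum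
          intro i _
          have : nseq i ≠ n := fun h => hc ⟨i, h⟩
          split_ifs <;> omega
        omega
      · rintro ⟨i, rfl⟩
        have hi := hMle i
        constructor
        · have : g (nseq i - 1) = g (nseq i) := by
            apply Finset.sum_congr rfl
            intro j _
            have := hsep i j
            have := h2 i
            split_ifs <;> omega
          omega
        · have : g (nseq i + 1) + 2 ≤ g (nseq i) := by
            simp only [hg]
            rw [← Finset.add_sum_erase _ _ (Finset.mem_univ i),
              ← Finset.add_sum_erase (a := i) _ (fun j => if nseq i ≤ nseq j then 2 else 0) (Finset.mem_univ i)]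
            have : ∑ j ∈ Finset.univ.erase i, (if nseq i + 1 ≤ nseq j then 2 else 0) ≤
              ∑ j ∈ Finset.univ.erase i, (if nseq i ≤ nseq j then 2 else 0) := by
              apply Finset.sum_le_sum
              intro j _
              split_ifs <;> omega
            simp only [le_refl, if_true]
            rw [if_neg (by omega)]
            omega
          omega
    rw [← key]
    generalize min n M + g n = A
    generalize min (n-1) M + g (n-1) = B
    generalize min (n+1) M + g (n+1) = C
    push_cast
    rw [c1]
    constructor
    · rintro ⟨h, h'⟩
      constructor <;> linarith
    · rintro ⟨h, h'⟩
      constructor <;> linarith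
end
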